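/- arXiv:math/0407054 — 9 statements merged into one kernel-verified Lean document; each statement's English description precedes it below -/
import Mathlib

section
/- Let H be a complex Hilbert space. Let (u_n) be a sequence of unitary operators on H and u_0 a unitary operator on H such that u_n ξ → u_0 ξ in norm for every ξ ∈ H. Let (k_n) be a sequence of bounded operators on H and k_0 a compact operator with ‖k_n − k_0‖ → 0. Then ‖u_n k_n u_n⁻¹ − u_0 k_0 u_0⁻¹‖ → 0. (Thus conjugation by unitaries, with the strong operator topology on the unitary group, is sequentially continuous into the compact operators with the norm topology; Proposition A1.1(i).) -/
/-!
With `v n = u n - u₀`, which is bounded by `2` and tends strongly to `0`, one has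
`u n * k n * (u n)⋆ - u₀ * k₀ * u₀⋆`
`= u n * (k n - k₀) * (u n)⋆ + v n * k₀ * (u n)⋆ + u₀ * (k₀ * (v n)⋆)`.
The first term is controlled by `‖k n - k₀‖`. The second tends to `0` in norm because a bounded
sequence converging strongly to `0` does so uniformly on the relatively compact image of the unit
ball under `k₀` (`tendsto_norm_mul_of_isCompactOperator`). For the third, the C⋆-identity gives
`‖k₀ * (v n)⋆‖ ^ 2 = ‖v n * (k₀⋆ * k₀) * (v n)⋆‖ ≤ 2 * ‖v n * (k₀⋆ * k₀)‖`, and the same lemma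
applies to the compact operator `k₀⋆ * k₀`; compactness of `k₀⋆` itself is not needed.
-/

open Filter

/-- Right multiplication by a compact operator turns bounded strong convergence to `0` into norm
convergence to `0`. -/
theorem tendsto_norm_mul_of_isCompactOperator {H : Type*} [NormedAddCommGroup H]
    [InnerProductSpace ℂ H] (v : ℕ → H →L[ℂ] H) (C : ℝ) (hC : 0 < C) (hv : ∀ n, ‖v n‖ ≤ C)
    (hv0 : ∀ ξ : H, Tendsto (fun n => v n ξ) atTop (nhds 0))
    (T : H →L[ℂ] H) (hT : IsCompactOperator (⇑T)) :
    Tendsto (fun n => ‖v n * T‖) atTop (nhds 0) := by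
  obtain ⟨K, hK, hTK⟩ := IsCompactOperator.image_closedBall_subset_compact
    (f := (T : H →ₗ[ℂ] H)) hT 1
  rw [Metric.tendsto_atTop']
  intro ε hε
  -- A finite `ε / (4 * C)`-net of `K`, on which `v n` is eventually smaller than `ε / 4`.
  obtain ⟨t, ht, hKt⟩ := Metric.totallyBounded_iff.1 hK.totallyBounded (ε / (4 * C))
    (by positivity)
  have hev : ∀ᶠ n in atTop, ∀ y ∈ t, ‖v n y‖ < ε / 4 := by
    rw [eventually_all_finite ht]
    intro y _
    have h := (hv0 y).norm
    rw [norm_zero] at h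
    exact h.eventually (gt_mem_nhds (by positivity))
  obtain ⟨N, hN⟩ := eventually_atTop.1 hev
  refine ⟨N, fun n hn => ?_⟩
  have hle : ‖v n * T‖ ≤ ε / 2 := by
    refine ContinuousLinearMap.opNorm_le_of_unit_norm (by positivity) fun x hx => ?_
    have hxK : T x ∈ K := hTK ⟨x, by simp [hx], rfl⟩
    obtain ⟨y, hy, hxy⟩ := Set.mem_iUnion₂.1 (hKt hxK)
    rw [Metric.mem_ball, dist_eq_norm] at hxy
    have h1 : ‖v n (T x - y)‖ ≤ C * (ε / (4 * C)) :=
      ((v n).le_opNorm _).trans (mul_le_mul (hv n) hxy.le (norm_nonneg _) hC.le)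
    have h2 : C * (ε / (4 * C)) = ε / 4 := by field_simp
    have h3 := hN n hn.le y hy
    calc ‖(v n * T) x‖ = ‖v n (T x - y) + v n y‖ := by simp
      _ ≤ ‖v n (T x - y)‖ + ‖v n y‖ := norm_add_le _ _
      _ ≤ ε / 2 := by linarith
  rw [Real.dist_eq, sub_zero, abs_of_nonneg (norm_nonneg _)]
  linarith

/-- Proposition A1.1(i): conjugation by unitaries, with the strong operator topology on
the unitary group, is sequentially continuous into the compact operators with the norm
topology. -/
theorem stmt_0 {H : Type*} [NormedAddCommGroup H] [InnerProductSpace ℂ H] [CompleteSpace H]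
    (u : ℕ → H →L[ℂ] H) (u₀ : H →L[ℂ] H)
    (hu : ∀ n, u n ∈ unitary (H →L[ℂ] H)) (hu₀ : u₀ ∈ unitary (H →L[ℂ] H))
    (huSOT : ∀ ξ : H, Tendsto (fun n => u n ξ) atTop (nhds (u₀ ξ)))
    (k : ℕ → H →L[ℂ] H) (k₀ : H →L[ℂ] H)
    (hk₀ : IsCompactOperator (⇑k₀))
    (hknorm : Tendsto (fun n => ‖k n - k₀‖) atTop (nhds 0)) :
    Tendsto (fun n => ‖u n * k n * star (u n) - u₀ * k₀ * star u₀‖) atTop (nhds 0) := by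
  -- Only `≤`, since `H` may be trivial.
  have hle : ∀ w ∈ unitary (H →L[ℂ] H), ‖w‖ ≤ 1 := fun w hw => by
    rw [← mul_one w, CStarRing.norm_mem_unitary_mul _ hw]
    exact ContinuousLinearMap.norm_id_le
  have hv : ∀ n, ‖u n - u₀‖ ≤ 2 := fun n => by
    have h1 := norm_sub_le (u n) u₀
    have h2 := hle _ (hu n)
    have h3 := hle _ hu₀
    linarith
  have hv0 : ∀ ξ : H, Tendsto (fun n => (u n - u₀) ξ) atTop (nhds 0) := fun ξ => by
    simpa using (huSOT ξ).sub_const (u₀ ξ)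
  have hA := tendsto_norm_mul_of_isCompactOperator _ 2 two_pos hv hv0 k₀ hk₀
  have hB := tendsto_norm_mul_of_isCompactOperator _ 2 two_pos hv hv0 (star k₀ * k₀)
    (hk₀.clm_comp (star k₀))
  have hB' : Tendsto (fun n => ‖k₀ * star (u n - u₀)‖) atTop (nhds 0) := by
    have hs := (hB.mul_const 2).sqrt
    rw [zero_mul, Real.sqrt_zero] at hs
    refine squeeze_zero (fun n => norm_nonneg _) (fun n => Real.le_sqrt_of_sq_le ?_) hs
    calc ‖k₀ * star (u n - u₀)‖ ^ 2
        = ‖(u n - u₀) * (star k₀ * k₀) * star (u n - u₀)‖ := by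
          rw [sq, ← CStarRing.norm_star_mul_self, star_mul, star_star]
          simp only [mul_assoc]
      _ ≤ ‖(u n - u₀) * (star k₀ * k₀)‖ * ‖star (u n - u₀)‖ := norm_mul_le _ _
      _ ≤ ‖(u n - u₀) * (star k₀ * k₀)‖ * 2 := by
          rw [norm_star]
          exact mul_le_mul_of_nonneg_left (hv n) (norm_nonneg _)
  have hsum := (hknorm.add hA).add hB'
  rw [add_zero, add_zero] at hsum
  refine squeeze_zero (fun n => norm_nonneg _) (fun n => ?_) hsum
  have hdecomp : u n * k n * star (u n) - u₀ * k₀ * star u₀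
      = u n * (k n - k₀) * star (u n) + (u n - u₀) * k₀ * star (u n)
        + u₀ * (k₀ * star (u n - u₀)) := by
    rw [star_sub]
    noncomm_ring
  rw [hdecomp]
  refine norm_add₃_le.trans (le_of_eq ?_)
  have hs : star (u n) ∈ unitary (H →L[ℂ] H) := Unitary.star_mem (hu n)
  rw [CStarRing.norm_mul_mem_unitary _ hs, CStarRing.norm_mul_mem_unitary _ hs,
    CStarRing.norm_mem_unitary_mul _ (hu n), CStarRing.norm_mem_unitary_mul _ hu₀]
end

section
/- Let H be a separable complex Hilbert space with a Hilbert (orthonormal) basis (e_i)_{i∈ℕ}. Let (u_n) be unitary operators with u_n ξ → u_0 ξ for every ξ ∈ H, where u_0 is unitary. Let k_0 be a Hilbert–Schmidt operator, i.e. ∑_i ‖k_0 e_i‖² < ∞, and let (k_n) be bounded operators with ∑_i ‖(k_n − k_0) e_i‖² → 0 as n → ∞. Then ∑_i ‖(u_n k_n u_n⁻¹ − u_0 k_0 u_0⁻¹) e_i‖² → 0 as n → ∞; that is, conjugation by unitaries with the strong operator topology is sequentially continuous on the Hilbert–Schmidt operators with the Hilbert–Schmidt norm (Proposition A1.1(ii)).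 -/
open Filter

/-!
The squared Hilbert–Schmidt norm is taken in `[0, ∞]` (`hsSq`). By Parseval and Tonelli it is
invariant under adjoints (`hsSq_star`), hence under left and right multiplication by unitaries,
and it satisfies `hsSq (S + T) ≤ 2 (hsSq S + hsSq T)`. Write
`uₙ kₙ uₙ* - u₀ k₀ u₀* = uₙ (kₙ - k₀) uₙ* + Bₙ` with
`Bₙ = (uₙ - u₀) k₀ uₙ* + u₀ k₀ (uₙ - u₀)*`. By unitary invariance and adjoints the two terms of `Bₙ`
have the same size as `(uₙ - u₀) k₀` and `(uₙ - u₀) k₀*`, which tend to zero by dominated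
convergence (`tendsto_hsSq_sub_mul`), so strong convergence of the adjoints is not needed.

The real-valued `tsum` is `(hsSq _).toReal`, which is `0` when `hsSq _ = ∞`. The operators
`kₙ - k₀` are not assumed to be Hilbert–Schmidt, but if `hsSq (kₙ - k₀) = ∞` then, `Bₙ` being
Hilbert–Schmidt, the conjugated difference also has infinite `hsSq`, so both real sums vanish and
the comparison of real sums holds in every case.
-/

section HilbertSchmidt

variable {H : Type*} [NormedAddCommGroup H] [InnerProductSpace ℂ H] [CompleteSpace H]

/-- The squared Hilbert–Schmidt norm of `T` with respect to the Hilbert basis `e`, with value `∞`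
when `T` is not Hilbert–Schmidt. -/
noncomputable def hsSq (e : HilbertBasis ℕ ℂ H) (T : H →L[ℂ] H) : ENNReal :=
  ∑' i, ENNReal.ofReal (‖T (e i)‖ ^ 2)

lemma toReal_hsSq (e : HilbertBasis ℕ ℂ H) (T : H →L[ℂ] H) :
    (hsSq e T).toReal = ∑' i, ‖T (e i)‖ ^ 2 := by
  rw [hsSq, ENNReal.tsum_toReal_eq (fun _ => ENNReal.ofReal_ne_top)]
  exact tsum_congr fun i => ENNReal.toReal_ofReal (by positivity)

/-- Parseval's identity in `[0, ∞]`. -/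
lemma ofReal_norm_sq_eq_tsum (e : HilbertBasis ℕ ℂ H) (x : H) :
    ENNReal.ofReal (‖x‖ ^ 2) = ∑' j, ENNReal.ofReal (‖inner ℂ (e j) x‖ ^ 2) := by
  have h := (Complex.hasSum_re (e.hasSum_inner_mul_inner x x))
  have h2 : HasSum (fun j => ‖inner ℂ (e j) x‖ ^ 2) (‖x‖ ^ 2) := by
    convert h using 1
    · ext j
      rw [← inner_conj_symm x (e j), mul_comm, Complex.mul_conj, Complex.ofReal_re,
        Complex.normSq_eq_norm_sq]
    · rw [inner_self_eq_norm_sq_to_K]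
      norm_cast
  rw [← h2.tsum_eq, ENNReal.ofReal_tsum_of_nonneg (fun _ => by positivity) h2.summable]

lemma hsSq_star (e : HilbertBasis ℕ ℂ H) (T : H →L[ℂ] H) : hsSq e (star T) = hsSq e T := by
  unfold hsSq
  simp_rw [ofReal_norm_sq_eq_tsum e]
  rw [ENNReal.tsum_comm]
  refine tsum_congr fun i => tsum_congr fun j => ?_
  rw [ContinuousLinearMap.star_eq_adjoint, ContinuousLinearMap.adjoint_inner_right,
    norm_inner_symm]

lemma norm_unitary_apply {v : H →L[ℂ] H} (hv : v ∈ unitary (H →L[ℂ] H)) (x : H) :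
    ‖v x‖ = ‖x‖ :=
  ContinuousLinearMap.norm_map_of_mem_unitary hv x

lemma hsSq_unitary_mul (e : HilbertBasis ℕ ℂ H) {v : H →L[ℂ] H}
    (hv : v ∈ unitary (H →L[ℂ] H)) (T : H →L[ℂ] H) : hsSq e (v * T) = hsSq e T := by
  simp [hsSq, norm_unitary_apply hv]

lemma hsSq_mul_star_unitary (e : HilbertBasis ℕ ℂ H) {v : H →L[ℂ] H}
    (hv : v ∈ unitary (H →L[ℂ] H)) (T : H →L[ℂ] H) : hsSq e (T * star v) = hsSq e T := by
  rw [← hsSq_star e (T * star v), star_mul, star_star, hsSq_unitary_mul e hv, hsSq_star]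

lemma hsSq_neg (e : HilbertBasis ℕ ℂ H) (T : H →L[ℂ] H) : hsSq e (-T) = hsSq e T := by
  simp [hsSq]

lemma hsSq_add_le (e : HilbertBasis ℕ ℂ H) (S T : H →L[ℂ] H) :
    hsSq e (S + T) ≤ 2 * (hsSq e S + hsSq e T) := by
  unfold hsSq
  rw [← ENNReal.tsum_add, ← ENNReal.tsum_mul_left]
  refine ENNReal.tsum_le_tsum fun i => ?_
  rw [← ENNReal.ofReal_add (by positivity) (by positivity),
    show (2 : ENNReal) = ENNReal.ofReal 2 by simp, ← ENNReal.ofReal_mul (by norm_num)]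
  apply ENNReal.ofReal_le_ofReal
  have h : ‖(S + T) (e i)‖ ≤ ‖S (e i)‖ + ‖T (e i)‖ := norm_add_le _ _
  nlinarith [norm_nonneg ((S + T) (e i)), sq_nonneg (‖S (e i)‖ - ‖T (e i)‖)]

lemma summable_of_hsSq_ne_top (e : HilbertBasis ℕ ℂ H) {T : H →L[ℂ] H} (hT : hsSq e T ≠ ⊤) :
    Summable fun i => ‖T (e i)‖ ^ 2 := by
  refine (ENNReal.summable_toReal hT).congr fun i => ?_
  exact ENNReal.toReal_ofReal (by positivity)

lemma hsSq_sub_mul_ne_top (e : HilbertBasis ℕ ℂ H) {v w : H →L[ℂ] H}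
    (hv : v ∈ unitary (H →L[ℂ] H)) (hw : w ∈ unitary (H →L[ℂ] H)) {T : H →L[ℂ] H}
    (hT : hsSq e T ≠ ⊤) : hsSq e ((v - w) * T) ≠ ⊤ := by
  rw [sub_mul, sub_eq_add_neg]
  refine ne_top_of_le_ne_top ?_ (hsSq_add_le e _ _)
  rw [hsSq_neg, hsSq_unitary_mul e hv, hsSq_unitary_mul e hw]
  exact ENNReal.mul_ne_top (by simp) (ENNReal.add_ne_top.2 ⟨hT, hT⟩)

/-- Dominated convergence: the summands are bounded by `(2 ‖T eᵢ‖)²`. -/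
lemma tendsto_hsSq_sub_mul (e : HilbertBasis ℕ ℂ H) {u : ℕ → H →L[ℂ] H} {u₀ : H →L[ℂ] H}
    (hu : ∀ n, u n ∈ unitary (H →L[ℂ] H)) (hu₀ : u₀ ∈ unitary (H →L[ℂ] H))
    (huSOT : ∀ ξ : H, Tendsto (fun n => u n ξ) atTop (nhds (u₀ ξ))) {T : H →L[ℂ] H}
    (hT : hsSq e T ≠ ⊤) :
    Tendsto (fun n => (hsSq e ((u n - u₀) * T)).toReal) atTop (nhds 0) := by
  simp_rw [toReal_hsSq]
  have key := tendsto_tsum_of_dominated_convergence (𝓕 := atTop)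
    (f := fun n i => ‖((u n - u₀) * T) (e i)‖ ^ 2) (g := fun _ : ℕ => (0 : ℝ))
    (bound := fun i => 4 * ‖T (e i)‖ ^ 2)
    ((summable_of_hsSq_ne_top e hT).mul_left 4)
    (fun i => by
      have h := ((huSOT (T (e i))).sub_const (u₀ (T (e i)))).norm.pow 2
      simpa using h)
    (Eventually.of_forall fun n i => by
      have h : ‖u n (T (e i)) - u₀ (T (e i))‖ ≤ ‖u n (T (e i))‖ + ‖u₀ (T (e i))‖ :=
        norm_sub_le _ _
      rw [norm_unitary_apply (hu n), norm_unitary_apply hu₀] at h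
      have h' : ‖((u n - u₀) * T) (e i)‖ ≤ 2 * ‖T (e i)‖ := by
        simp only [ContinuousLinearMap.mul_apply, ContinuousLinearMap.sub_apply]
        linarith
      rw [Real.norm_of_nonneg (by positivity)]
      nlinarith [norm_nonneg (((u n - u₀) * T) (e i))])
  simpa using key

/-- Since `2 hsSq B` is finite, `hsSq A` and `hsSq (A + B)` are finite or infinite together, so the
estimate survives the convention `∞.toReal = 0`. -/
lemma toReal_hsSq_add_le (e : HilbertBasis ℕ ℂ H) (A : H →L[ℂ] H) {B : H →L[ℂ] H}
    (hB : hsSq e B ≠ ⊤) :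
    (hsSq e (A + B)).toReal ≤ 2 * ((hsSq e A).toReal + (hsSq e B).toReal) := by
  by_cases hA : hsSq e A = ⊤
  · have hAB : hsSq e (A + B) = ⊤ := by
      by_contra h
      have h1 := hsSq_add_le e (A + B) (-B)
      rw [add_neg_cancel_right, hA, hsSq_neg, top_le_iff] at h1
      exact ENNReal.mul_ne_top (by simp) (ENNReal.add_ne_top.2 ⟨h, hB⟩) h1
    rw [hAB, ENNReal.toReal_top]
    positivity
  · have h := ENNReal.toReal_mono
      (ENNReal.mul_ne_top (by simp) (ENNReal.add_ne_top.2 ⟨hA, hB⟩)) (hsSq_add_le e A B)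
    rwa [ENNReal.toReal_mul, ENNReal.toReal_add hA hB, ENNReal.toReal_ofNat] at h

end HilbertSchmidt

/-- Proposition A1.1(ii): conjugation by unitaries, with the strong operator topology on
the unitary group, is sequentially continuous on the Hilbert–Schmidt operators with the
Hilbert–Schmidt norm (expressed via a Hilbert basis `e` of the separable space `H`). -/
theorem stmt_1 {H : Type*} [NormedAddCommGroup H] [InnerProductSpace ℂ H] [CompleteSpace H]
    (e : HilbertBasis ℕ ℂ H)
    (u : ℕ → H →L[ℂ] H) (u₀ : H →L[ℂ] H)
    (hu : ∀ n, u n ∈ unitary (H →L[ℂ] H)) (hu₀ : u₀ ∈ unitary (H →L[ℂ] H))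
    (huSOT : ∀ ξ : H, Tendsto (fun n => u n ξ) atTop (nhds (u₀ ξ)))
    (k : ℕ → H →L[ℂ] H) (k₀ : H →L[ℂ] H)
    (hk₀ : Summable fun i => ‖k₀ (e i)‖ ^ 2)
    (hkHS : Tendsto (fun n => ∑' i, ‖(k n - k₀) (e i)‖ ^ 2) atTop (nhds 0)) :
    Tendsto (fun n => ∑' i, ‖(u n * k n * star (u n) - u₀ * k₀ * star u₀) (e i)‖ ^ 2)
      atTop (nhds 0) := by
  have hT : hsSq e k₀ ≠ ⊤ := by
    rw [hsSq, ← ENNReal.ofReal_tsum_of_nonneg (fun _ => by positivity) hk₀]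
    exact ENNReal.ofReal_ne_top
  have hT' : hsSq e (star k₀) ≠ ⊤ := by rwa [hsSq_star]
  simp_rw [← toReal_hsSq] at hkHS ⊢
  have hlim := (hkHS.add (((tendsto_hsSq_sub_mul e hu hu₀ huSOT hT).add
    (tendsto_hsSq_sub_mul e hu hu₀ huSOT hT')).const_mul 2)).const_mul 2
  simp only [add_zero, mul_zero] at hlim
  refine squeeze_zero (fun _ => ENNReal.toReal_nonneg) (fun n => ?_) hlim
  have e1 : hsSq e ((u n - u₀) * k₀ * star (u n)) = hsSq e ((u n - u₀) * k₀) :=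
    hsSq_mul_star_unitary e (hu n) _
  have e2 : hsSq e (u₀ * (k₀ * star (u n - u₀))) = hsSq e ((u n - u₀) * star k₀) := by
    rw [hsSq_unitary_mul e hu₀, ← hsSq_star, star_mul, star_star]
  have e3 : hsSq e (u n * (k n - k₀) * star (u n)) = hsSq e (k n - k₀) := by
    rw [hsSq_mul_star_unitary e (hu n), hsSq_unitary_mul e (hu n)]
  have f1 := hsSq_sub_mul_ne_top e (hu n) hu₀ hT
  have f2 := hsSq_sub_mul_ne_top e (hu n) hu₀ hT'
  have hB : hsSq e ((u n - u₀) * k₀ * star (u n) + u₀ * (k₀ * star (u n - u₀))) ≠ ⊤ := by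
    refine ne_top_of_le_ne_top ?_ (hsSq_add_le e _ _)
    rw [e1, e2]
    exact ENNReal.mul_ne_top (by simp) (ENNReal.add_ne_top.2 ⟨f1, f2⟩)
  have hdecomp : u n * k n * star (u n) - u₀ * k₀ * star u₀ = u n * (k n - k₀) * star (u n) +
      ((u n - u₀) * k₀ * star (u n) + u₀ * (k₀ * star (u n - u₀))) := by
    rw [star_sub]
    noncomm_ring
  have g1 := toReal_hsSq_add_le e (u n * (k n - k₀) * star (u n)) hB
  have g2 := toReal_hsSq_add_le e ((u n - u₀) * k₀ * star (u n)) (e2 ▸ f2)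
  rw [e1, e2] at g2
  rw [← hdecomp, e3] at g1
  linarith
end

section
/- Let H be a complex Hilbert space. Suppose (u_n) are unitary operators with u_n ξ → u_0 ξ for all ξ ∈ H, u_0 unitary; (A_n) and (B_n) are bounded operators with A_n ξ → A_0 ξ and B_n ξ → B_0 ξ for all ξ; for every n (including n = 0) the operators A_n B_n − 1 and B_n A_n − 1 are compact; and ‖(A_n B_n − 1) − (A_0 B_0 − 1)‖ → 0 and ‖(B_n A_n − 1) − (B_0 A_0 − 1)‖ → 0. Then u_n A_n u_n⁻¹ → u_0 A_0 u_0⁻¹ and u_n B_n u_n⁻¹ → u_0 B_0 u_0⁻¹ in the strong operator topology, and ‖u_n (A_n B_n − 1) u_n⁻¹ − u_0 (A_0 B_0 − 1) u_0⁻¹‖ → 0 and ‖u_n (B_n A_n − 1) u_n⁻¹ − u_0 (B_0 A_0 − 1) u_0⁻¹‖ → 0. (This is the continuity of the conjugation action of the unitary group, with the strong operator topology, on the space Fred′(H) of Fredholm operators with chosen parametrices; the unitary case of Proposition 3.1(ii).) -/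
/-!
Strong convergence of a sequence of operators entails a uniform norm bound (Banach–Steinhaus), so
multiplication is sequentially jointly continuous for the strong topology; moreover
`‖uₙ* ξ - u₀* ξ‖ = ‖ξ - uₙ u₀* ξ‖`, so the adjoints of the unitaries also converge strongly.
This gives the two strong limits.

For the norm limits, a bounded sequence `Tₙ → 0` in the strong topology satisfies `‖Tₙ K‖ → 0` for
`K` compact, because the convergence is uniform on the relatively compact image of the unit ball
(`tendsto_norm_mul_compact`). With `Tₙ = uₙ - u₀` this handles multiplication of `K` on the left.
Multiplication by `Tₙ*` on the right is handled by the C⋆-identity: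
`‖K Tₙ*‖² = ‖Tₙ K* K Tₙ*‖ ≤ ‖Tₙ (K* K)‖ ‖Tₙ‖`, where `K* K` is compact, so compactness of `K*`
itself is not needed. Finally
`uₙ Kₙ uₙ* - u₀ K₀ u₀* = uₙ (Kₙ - K₀) uₙ* + (uₙ - u₀) K₀ uₙ* + u₀ K₀ (uₙ - u₀)*`.
-/

open Filter

section Conjugation

variable {H : Type*} [NormedAddCommGroup H] [InnerProductSpace ℂ H] [CompleteSpace H]

/-- Joint sequential continuity of evaluation, for the strong operator topology. -/
lemma tendsto_apply_of_sot {T : ℕ → H →L[ℂ] H} {T₀ : H →L[ℂ] H}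
    (hT : ∀ ξ : H, Tendsto (fun n => T n ξ) atTop (nhds (T₀ ξ)))
    {x : ℕ → H} {x₀ : H} (hx : Tendsto x atTop (nhds x₀)) :
    Tendsto (fun n => T n (x n)) atTop (nhds (T₀ x₀)) := by
  obtain ⟨C, hC⟩ : ∃ C, ∀ n, ‖T n‖ ≤ C := by
    refine banach_steinhaus fun ξ => ?_
    obtain ⟨C, hC⟩ := (hT ξ).norm.bddAbove_range
    exact ⟨C, fun n => hC ⟨n, rfl⟩⟩
  have h0 : Tendsto (fun n => T n (x n - x₀)) atTop (nhds 0) := by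
    refine squeeze_zero_norm (a := fun n => C * ‖x n - x₀‖)
      (fun n => (T n).le_of_opNorm_le (hC n) _) ?_
    simpa using (tendsto_iff_norm_sub_tendsto_zero.1 hx).const_mul C
  simpa using h0.add (hT x₀)

/-- A bounded sequence tending strongly to `0` tends to `0` uniformly on compact sets, hence in norm
after composition with a compact operator. -/
lemma tendsto_norm_mul_compact {T : ℕ → H →L[ℂ] H} {C : ℝ} (hC : ∀ n, ‖T n‖ ≤ C)
    (hT : ∀ ξ : H, Tendsto (fun n => T n ξ) atTop (nhds 0))
    {K : H →L[ℂ] H} (hK : IsCompactOperator (⇑K)) :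
    Tendsto (fun n => ‖T n * K‖) atTop (nhds 0) := by
  have hC0 : 0 ≤ C := (norm_nonneg _).trans (hC 0)
  obtain ⟨S, hS, hKS⟩ :=
    IsCompactOperator.image_closedBall_subset_compact (f := (K : H →ₗ[ℂ] H)) hK 1
  rw [Metric.tendsto_atTop]
  intro ε hε
  -- A `δ`-net of `S` gives the bound `(C + 1) * δ = ε / 2`.
  set δ : ℝ := ε / (2 * (C + 1)) with hδ
  have hδ0 : 0 < δ := by positivity
  have hδε : C * δ + δ = ε / 2 := by rw [hδ]; field_simp
  obtain ⟨t, ht, hSt⟩ := Metric.totallyBounded_iff.1 hS.totallyBounded δ hδ0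
  have hev : ∀ᶠ n in atTop, ∀ y ∈ t, ‖T n y‖ < δ := by
    rw [ht.eventually_all]
    intro y _
    exact (tendsto_zero_iff_norm_tendsto_zero.1 (hT y)).eventually_lt_const hδ0
  obtain ⟨N, hN⟩ := eventually_atTop.1 hev
  refine ⟨N, fun n hn => ?_⟩
  rw [Real.dist_0_eq_abs, abs_of_nonneg (norm_nonneg _)]
  refine lt_of_le_of_lt (b := ε / 2) ?_ (by linarith)
  refine ContinuousLinearMap.opNorm_le_of_unit_norm (by positivity) fun x hx => ?_
  have hxS : K x ∈ S := hKS ⟨x, by simp [hx], rfl⟩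
  obtain ⟨y, hy, hxy⟩ := Set.mem_iUnion₂.1 (hSt hxS)
  rw [Metric.mem_ball, dist_eq_norm] at hxy
  calc ‖(T n * K) x‖ = ‖T n (K x - y) + T n y‖ := by simp
    _ ≤ ‖T n (K x - y)‖ + ‖T n y‖ := norm_add_le _ _
    _ ≤ C * δ + δ := add_le_add
        (((T n).le_of_opNorm_le (hC n) _).trans (mul_le_mul_of_nonneg_left hxy.le hC0))
        (hN n hn y hy).le
    _ = ε / 2 := hδε

/-- The right-handed version of `tendsto_norm_mul_compact`, obtained from the C⋆-identity. -/
lemma tendsto_norm_compact_mul_star {T : ℕ → H →L[ℂ] H} {C : ℝ} (hC : ∀ n, ‖T n‖ ≤ C)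
    (hT : ∀ ξ : H, Tendsto (fun n => T n ξ) atTop (nhds 0))
    {K : H →L[ℂ] H} (hK : IsCompactOperator (⇑K)) :
    Tendsto (fun n => ‖K * star (T n)‖) atTop (nhds 0) := by
  have hKK : IsCompactOperator (⇑(star K * K)) := hK.clm_comp (star K)
  have h := (tendsto_norm_mul_compact hC hT hKK).mul_const C
  rw [zero_mul] at h
  have hsq : Tendsto (fun n => ‖K * star (T n)‖ ^ 2) atTop (nhds 0) := by
    refine squeeze_zero (fun n => by positivity) (fun n => ?_) h
    calc ‖K * star (T n)‖ ^ 2 = ‖star (K * star (T n)) * (K * star (T n))‖ := by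
          rw [CStarRing.norm_star_mul_self, sq]
      _ = ‖(T n * (star K * K)) * star (T n)‖ := by
          rw [star_mul, star_star]; simp only [mul_assoc]
      _ ≤ ‖T n * (star K * K)‖ * ‖star (T n)‖ := norm_mul_le _ _
      _ ≤ ‖T n * (star K * K)‖ * C := by
          rw [norm_star]; exact mul_le_mul_of_nonneg_left (hC n) (norm_nonneg _)
  simpa using hsq.sqrt

lemma norm_le_one_of_mem_unitary {v : H →L[ℂ] H} (hv : v ∈ unitary (H →L[ℂ] H)) : ‖v‖ ≤ 1 := by
  have h : ‖v‖ * ‖v‖ ≤ 1 := by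
    rw [← CStarRing.norm_star_mul_self, (Unitary.mem_iff.1 hv).1]
    exact ContinuousLinearMap.norm_id_le
  nlinarith [norm_nonneg v]

variable {u : ℕ → H →L[ℂ] H} {u₀ : H →L[ℂ] H}

/-- On the unitary group the adjoint is strongly continuous. -/
lemma tendsto_star_apply_of_unitary
    (hu : ∀ n, u n ∈ unitary (H →L[ℂ] H)) (hu₀ : u₀ ∈ unitary (H →L[ℂ] H))
    (huSOT : ∀ ξ : H, Tendsto (fun n => u n ξ) atTop (nhds (u₀ ξ))) (ξ : H) :
    Tendsto (fun n => star (u n) ξ) atTop (nhds (star u₀ ξ)) := by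
  have h0 : u₀ (star u₀ ξ) = ξ := by
    simpa using congrArg (fun f : H →L[ℂ] H => f ξ) (Unitary.mem_iff.1 hu₀).2
  rw [tendsto_iff_norm_sub_tendsto_zero]
  have h := tendsto_iff_norm_sub_tendsto_zero.1 (huSOT (star u₀ ξ))
  refine squeeze_zero (fun _ => norm_nonneg _) (fun n => ?_) h
  have h1 : star (u n) (u n (star u₀ ξ)) = star u₀ ξ := by
    simpa using congrArg (fun f : H →L[ℂ] H => f (star u₀ ξ)) (Unitary.mem_iff.1 (hu n)).1
  calc ‖star (u n) ξ - star u₀ ξ‖ = ‖star (u n) (ξ - u n (star u₀ ξ))‖ := by rw [map_sub, h1]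
    _ ≤ 1 * ‖ξ - u n (star u₀ ξ)‖ :=
        (star (u n)).le_of_opNorm_le
          (norm_le_one_of_mem_unitary (Unitary.star_mem (hu n))) _
    _ = ‖u n (star u₀ ξ) - u₀ (star u₀ ξ)‖ := by rw [one_mul, h0, norm_sub_rev]

lemma tendsto_conj_sot
    (hu : ∀ n, u n ∈ unitary (H →L[ℂ] H)) (hu₀ : u₀ ∈ unitary (H →L[ℂ] H))
    (huSOT : ∀ ξ : H, Tendsto (fun n => u n ξ) atTop (nhds (u₀ ξ)))
    {T : ℕ → H →L[ℂ] H} {T₀ : H →L[ℂ] H}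
    (hT : ∀ ξ : H, Tendsto (fun n => T n ξ) atTop (nhds (T₀ ξ))) (ξ : H) :
    Tendsto (fun n => (u n * T n * star (u n)) ξ) atTop (nhds ((u₀ * T₀ * star u₀) ξ)) :=
  tendsto_apply_of_sot huSOT
    (tendsto_apply_of_sot hT (tendsto_star_apply_of_unitary hu hu₀ huSOT ξ))

lemma tendsto_conj_norm
    (hu : ∀ n, u n ∈ unitary (H →L[ℂ] H)) (hu₀ : u₀ ∈ unitary (H →L[ℂ] H))
    (huSOT : ∀ ξ : H, Tendsto (fun n => u n ξ) atTop (nhds (u₀ ξ)))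
    {K : ℕ → H →L[ℂ] H} {K₀ : H →L[ℂ] H} (hK₀ : IsCompactOperator (⇑K₀))
    (hK : Tendsto (fun n => ‖K n - K₀‖) atTop (nhds 0)) :
    Tendsto (fun n => ‖u n * K n * star (u n) - u₀ * K₀ * star u₀‖) atTop (nhds 0) := by
  have hC : ∀ n, ‖u n - u₀‖ ≤ 1 + 1 := fun n => (norm_sub_le _ _).trans
    (add_le_add (norm_le_one_of_mem_unitary (hu n)) (norm_le_one_of_mem_unitary hu₀))
  have hT : ∀ ξ : H, Tendsto (fun n => (u n - u₀) ξ) atTop (nhds 0) := fun ξ => by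
    simpa using (huSOT ξ).sub_const (u₀ ξ)
  have hsum := (hK.add (tendsto_norm_mul_compact hC hT hK₀)).add
    (tendsto_norm_compact_mul_star hC hT hK₀)
  simp only [add_zero] at hsum
  refine squeeze_zero (fun _ => norm_nonneg _) (fun n => ?_) hsum
  have hl : ∀ {v : H →L[ℂ] H}, v ∈ unitary (H →L[ℂ] H) → ∀ X, ‖v * X‖ ≤ ‖X‖ := fun hv X =>
    (norm_mul_le _ _).trans
      (mul_le_of_le_one_left (norm_nonneg _) (norm_le_one_of_mem_unitary hv))
  have hr : ∀ X, ‖X * star (u n)‖ ≤ ‖X‖ := fun X =>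
    (norm_mul_le _ _).trans (mul_le_of_le_one_right (norm_nonneg _)
      (norm_le_one_of_mem_unitary (Unitary.star_mem (hu n))))
  have hdec : u n * K n * star (u n) - u₀ * K₀ * star u₀ =
      u n * (K n - K₀) * star (u n) + (u n - u₀) * K₀ * star (u n)
        + u₀ * (K₀ * star (u n - u₀)) := by
    rw [star_sub]; noncomm_ring
  rw [hdec]
  exact norm_add₃_le.trans
    (add_le_add (add_le_add ((hr _).trans (hl (hu n) _)) (hr _)) (hl hu₀ _))

end Conjugation

/-- The unitary case of Proposition 3.1(ii): the conjugation action of the unitary group,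
with the strong operator topology, on the space Fred′(H) of Fredholm operators with chosen
parametrices is (sequentially) continuous. -/
theorem stmt_2 {H : Type*} [NormedAddCommGroup H] [InnerProductSpace ℂ H] [CompleteSpace H]
    (u : ℕ → H →L[ℂ] H) (u₀ : H →L[ℂ] H)
    (hu : ∀ n, u n ∈ unitary (H →L[ℂ] H)) (hu₀ : u₀ ∈ unitary (H →L[ℂ] H))
    (huSOT : ∀ ξ : H, Tendsto (fun n => u n ξ) atTop (nhds (u₀ ξ)))
    (A B : ℕ → H →L[ℂ] H) (A₀ B₀ : H →L[ℂ] H)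
    (hASOT : ∀ ξ : H, Tendsto (fun n => A n ξ) atTop (nhds (A₀ ξ)))
    (hBSOT : ∀ ξ : H, Tendsto (fun n => B n ξ) atTop (nhds (B₀ ξ)))
    (hABcpt : ∀ n, IsCompactOperator (⇑(A n * B n - 1)))
    (hBAcpt : ∀ n, IsCompactOperator (⇑(B n * A n - 1)))
    (hAB₀cpt : IsCompactOperator (⇑(A₀ * B₀ - 1)))
    (hBA₀cpt : IsCompactOperator (⇑(B₀ * A₀ - 1)))
    (hABnorm : Tendsto (fun n => ‖(A n * B n - 1) - (A₀ * B₀ - 1)‖) atTop (nhds 0))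
    (hBAnorm : Tendsto (fun n => ‖(B n * A n - 1) - (B₀ * A₀ - 1)‖) atTop (nhds 0)) :
    (∀ ξ : H, Tendsto (fun n => (u n * A n * star (u n)) ξ) atTop
        (nhds ((u₀ * A₀ * star u₀) ξ))) ∧
    (∀ ξ : H, Tendsto (fun n => (u n * B n * star (u n)) ξ) atTop
        (nhds ((u₀ * B₀ * star u₀) ξ))) ∧
    Tendsto (fun n => ‖u n * (A n * B n - 1) * star (u n) - u₀ * (A₀ * B₀ - 1) * star u₀‖)
      atTop (nhds 0) ∧
    Tendsto (fun n => ‖u n * (B n * A n - 1) * star (u n) - u₀ * (B₀ * A₀ - 1) * star u₀‖)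
      atTop (nhds 0) := by
  exact ⟨tendsto_conj_sot hu hu₀ huSOT hASOT, tendsto_conj_sot hu hu₀ huSOT hBSOT,
    tendsto_conj_norm hu hu₀ huSOT hAB₀cpt hABnorm,
    tendsto_conj_norm hu hu₀ huSOT hBA₀cpt hBAnorm⟩
end

section
/- Let H = L²((0,1); ℂ) (square-integrable functions for Lebesgue measure). There exists a family of maps h_t : B(H) → B(H), for t ∈ [0,1], such that: (a) h_1 is the identity and h_0(A) = 1 for all A; (b) for every t ∈ (0,1] and all A, B ∈ B(H): h_t(AB) = h_t(A) h_t(B), h_t(A*) = h_t(A)*, h_t(1) = 1, and ‖h_t(A)‖ ≤ max(‖A‖, 1); (c) for every t ∈ (0,1] and every compact operator K, the operator h_t(1 + K) − 1 is compact; (d) (joint sequential strong continuity) if A_n → A in the strong operator topology and t_n → t in [0,1], then h_{t_n}(A_n) → h_t(A) in the strong operator topology. (This is the contracting homotopy underlying Proposition A2.1: it carries unitaries to unitaries, invertibles to invertibles, and operators invertible modulo compacts to operators invertible modulo compacts, and contracts each of these sets in the topology of pointwise convergence.) -/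
/-!
The homotopy is `h t A = V A V* + (1 - V V*)`, where `V = V_t` is the isometry of `L²((0,1); ℂ)`
onto `L²((0,t); ℂ)` given by `(V f)(x) = t^(-1/2) f(x/t)`, and `V_0 = 0`. So `h t A` is a copy of `A`
on `L²((0,t); ℂ)` and the identity on the orthogonal complement, and the algebraic identities,
the norm bound and the compactness of `h t (1 + K) - 1 = V K V*` all follow from `V* V = 1`.

The adjoint `W = V*`, with `(W f)(y) = √t f(t y)`, is the primary object here (`dilation`), and
`h t` is `transport (dilation t)`. The identity `W W* = 1` comes from `mul_star_eq_one`, which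
avoids computing the adjoint of `W`. For the joint continuity, `W_t` is strongly continuous on
`[0, 1]` (`tendsto_dilation`), its adjoint is strongly continuous at each `t > 0`
(`tendsto_star_apply`), and strongly convergent sequences `A_n` are bounded by Banach-Steinhaus;
at `t = 0` it suffices that `W_t → 0` strongly and `‖W_t*‖ ≤ 1` (`tendsto_transport`).
-/

open Filter MeasureTheory

local notation "Hsp" => MeasureTheory.Lp ℂ 2 (MeasureTheory.volume.restrict (Set.Ioo (0:ℝ) 1))

namespace ContractingHomotopy

/-! ### Transporting operators along a coisometry -/

/-- Strong convergence of a bounded sequence of operators, evaluated along a convergent sequence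
of vectors. -/
lemma tendsto_apply_of_bounded {H : Type*} [NormedAddCommGroup H] [InnerProductSpace ℂ H]
    {T : ℕ → H →L[ℂ] H} {S : H →L[ℂ] H} {C : ℝ}
    (hC : ∀ n, ‖T n‖ ≤ C) {x : ℕ → H} {y : H}
    (hT : Tendsto (fun n => T n y) atTop (nhds (S y))) (hx : Tendsto x atTop (nhds y)) :
    Tendsto (fun n => T n (x n)) atTop (nhds (S y)) := by
  have h : Tendsto (fun n => T n (x n - y)) atTop (nhds 0) := by
    refine squeeze_zero_norm (fun n => (T n).le_of_opNorm_le (hC n) _) ?_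
    have : Tendsto (fun n => x n - y) atTop (nhds 0) := by simpa using hx.sub_const y
    simpa using this.norm.const_mul C
  simpa using h.add hT

lemma tendsto_of_dense {H : Type*} [NormedAddCommGroup H] [InnerProductSpace ℂ H]
    {W : ℕ → H →L[ℂ] H} {U : H →L[ℂ] H} (hb : ∀ n, ‖W n‖ ≤ 1)
    (hU : ‖U‖ ≤ 1) {D : Set H} (hD : Dense D)
    (hW : ∀ x ∈ D, Tendsto (fun n => W n x) atTop (nhds (U x))) (x : H) :
    Tendsto (fun n => W n x) atTop (nhds (U x)) := by
  rw [Metric.tendsto_atTop]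
  intro ε hε
  obtain ⟨y, hy, hxy⟩ := hD.exists_dist_lt x (by positivity : 0 < ε / 3)
  obtain ⟨N, hN⟩ := Metric.tendsto_atTop.1 (hW y hy) (ε / 3) (by positivity)
  refine ⟨N, fun n hn => ?_⟩
  have h1 : dist (W n x) (W n y) ≤ dist x y := by
    rw [dist_eq_norm, dist_eq_norm, ← map_sub]; simpa using (W n).le_of_opNorm_le (hb n) (x - y)
  have h2 : dist (U y) (U x) ≤ dist x y := by
    rw [dist_comm, dist_eq_norm, dist_eq_norm, ← map_sub]
    simpa using U.le_of_opNorm_le hU (x - y)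
  have := dist_triangle4 (W n x) (W n y) (U y) (U x)
  linarith [hN n hn]

section Abstract
variable {H : Type*} [NormedAddCommGroup H] [InnerProductSpace ℂ H] [CompleteSpace H]

/-- The operator `W* A W + (1 - W* W)`. If `W` is a coisometry, this is `A` transported to the
range of the isometry `W*`, extended by the identity on the orthogonal complement. -/
noncomputable def transport (W A : H →L[ℂ] H) : H →L[ℂ] H :=
  star W * A * W + (1 - star W * W)

/-- A contraction `W` is a coisometry as soon as every `f` has a preimage `g` of no larger norm;
such a `g` is necessarily `W* f`, because
`‖W* f - g‖² = ‖W* f‖² - 2 Re ⟪f, W g⟫ + ‖g‖² ≤ 0`. -/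
lemma mul_star_eq_one {W : H →L[ℂ] H} (hW : ‖W‖ ≤ 1)
    (h : ∀ f : H, ∃ g : H, ‖g‖ ≤ ‖f‖ ∧ W g = f) : W * star W = 1 := by
  ext f
  obtain ⟨g, hg, hWg⟩ := h f
  have h1 : ‖star W f‖ ≤ ‖f‖ := by
    have := (star W).le_of_opNorm_le ((norm_star W).trans_le hW) f
    rwa [one_mul] at this
  have h2 : inner ℂ (star W f) g = inner ℂ f f := by
    rw [ContinuousLinearMap.star_eq_adjoint, ContinuousLinearMap.adjoint_inner_left, hWg]
  have h3 : ‖star W f - g‖ ^ 2 ≤ 0 := by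
    rw [norm_sub_sq (𝕜 := ℂ), h2, inner_self_eq_norm_sq]
    nlinarith [norm_nonneg g, norm_nonneg (star W f), norm_nonneg f]
  have h4 : star W f = g := by
    rw [← sub_eq_zero, ← norm_eq_zero]
    exact pow_eq_zero_iff two_ne_zero |>.1 (le_antisymm h3 (sq_nonneg _))
  simp [h4, hWg]

lemma transport_mul {W : H →L[ℂ] H} (hW : W * star W = 1) (A B : H →L[ℂ] H) :
    transport W (A * B) = transport W A * transport W B := by
  unfold transport
  have h1 : W * (1 - star W * W) = 0 := by
    rw [mul_sub, ← mul_assoc, hW]; simp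
  have h2 : (1 - star W * W) * star W = 0 := by
    rw [sub_mul, mul_assoc, hW]; simp
  have h3 : (1 - star W * W) * (1 - star W * W) = 1 - star W * W := by
    rw [mul_sub, ← mul_assoc, h2]; simp
  calc _ = star W * A * (W * star W) * B * W + (1 - star W * W) := by
        rw [hW]; simp only [mul_assoc, one_mul]
    _ = star W * A * (W * star W) * B * W + star W * A * (W * (1 - star W * W))
        + ((1 - star W * W) * star W) * B * W
        + (1 - star W * W) * (1 - star W * W) := by
        rw [h1, h2, h3]; simp
    _ = _ := by noncomm_ring

lemma transport_star (W A : H →L[ℂ] H) :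
    transport W (star A) = star (transport W A) := by
  simp [transport, mul_assoc]

lemma transport_one (W : H →L[ℂ] H) : transport W 1 = 1 := by
  simp [transport]

lemma norm_star_apply {W : H →L[ℂ] H} (hW : W * star W = 1) (x : H) :
    ‖star W x‖ = ‖x‖ := by
  have h : W (star W x) = x := by simpa using DFunLike.congr_fun hW x
  have : ‖star W x‖ ^ 2 = ‖x‖ ^ 2 := by
    rw [← inner_self_eq_norm_sq (𝕜 := ℂ), ← inner_self_eq_norm_sq (𝕜 := ℂ) x]
    conv_lhs => rw [ContinuousLinearMap.star_eq_adjoint, ContinuousLinearMap.adjoint_inner_left,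
      ← ContinuousLinearMap.star_eq_adjoint, h]
  exact (sq_eq_sq₀ (norm_nonneg _) (norm_nonneg _)).1 this

/-- The summands of `transport W A x` lie in the range of `W*` and in its orthogonal complement,
so the bound follows from Pythagoras. -/
lemma norm_transport_le {W : H →L[ℂ] H} (hW : W * star W = 1) (A : H →L[ℂ] H) :
    ‖transport W A‖ ≤ max ‖A‖ 1 := by
  refine ContinuousLinearMap.opNorm_le_bound _ (by positivity) fun x => ?_
  have hWx : ∀ x, W (star W x) = x := fun x => by simpa using DFunLike.congr_fun hW x
  set r := x - star W (W x) with hr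
  have hWr : W r = 0 := by rw [hr, map_sub, hWx, sub_self]
  have orth : ∀ a, ‖star W a + r‖ ^ 2 = ‖a‖ ^ 2 + ‖r‖ ^ 2 := fun a => by
    have : inner ℂ (star W a) r = 0 := by
      rw [ContinuousLinearMap.star_eq_adjoint, ContinuousLinearMap.adjoint_inner_left, hWr,
        inner_zero_right]
    rw [norm_add_sq (𝕜 := ℂ), this, norm_star_apply hW]; simp
  have e1 : transport W A x = star W (A (W x)) + r := by simp [transport, hr]
  have e2 : x = star W (W x) + r := by simp [hr]
  have n1 := orth (A (W x))
  have n2 := orth (W x)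
  rw [← e1] at n1
  rw [← e2] at n2
  set M := max ‖A‖ 1
  have hM : 1 ≤ M := le_max_right _ _
  have hA : ‖A (W x)‖ ≤ M * ‖W x‖ := A.le_of_opNorm_le (le_max_left _ _) _
  have hA2 : ‖A (W x)‖ ^ 2 ≤ (M * ‖W x‖) ^ 2 := by gcongr
  have hr2 : ‖r‖ ^ 2 ≤ M ^ 2 * ‖r‖ ^ 2 := le_mul_of_one_le_left (sq_nonneg _) (by nlinarith)
  refine (sq_le_sq₀ (norm_nonneg _) (by positivity)).1 ?_
  rw [n1, mul_pow, n2]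
  nlinarith

lemma transport_compact (W K : H →L[ℂ] H) (hK : IsCompactOperator K) :
    IsCompactOperator ⇑(transport W (1 + K) - 1) := by
  have : transport W (1 + K) - 1 = star W * K * W := by
    unfold transport; noncomm_ring
  rw [this]
  exact (hK.clm_comp (star W)).comp_clm W

/-- Taking adjoints is not strongly continuous in general, but it is at a coisometry `U`, within
contractions: `‖W* x - U* x‖² ≤ 2‖x‖² - 2 Re ⟪x, W U* x⟫`, whose limit is `0` since
`U U* = 1`. -/
lemma tendsto_star_apply {W : ℕ → H →L[ℂ] H} {U : H →L[ℂ] H} (hU : U * star U = 1)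
    (hb : ∀ n, ‖W n‖ ≤ 1) (hW : ∀ x, Tendsto (fun n => W n x) atTop (nhds (U x))) (x : H) :
    Tendsto (fun n => star (W n) x) atTop (nhds (star U x)) := by
  have hUx : U (star U x) = x := by simpa using DFunLike.congr_fun hU x
  have h1 : Tendsto (fun n => 2 * ‖x‖ ^ 2 - 2 * RCLike.re (inner ℂ x (W n (star U x))))
      atTop (nhds 0) := by
    have := (((continuous_const (y := x)).inner (𝕜 := ℂ) continuous_id).tendsto _).comp
      (hW (star U x))
    have h := ((RCLike.continuous_re (K := ℂ)).tendsto _).comp this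
    have := (h.const_mul 2).const_sub (2 * ‖x‖ ^ 2)
    simp only [id, hUx, inner_self_eq_norm_sq (𝕜 := ℂ), sub_self] at this
    exact this
  have h2 : Tendsto (fun n => ‖star (W n) x - star U x‖ ^ 2) atTop (nhds 0) := by
    refine squeeze_zero (fun n => sq_nonneg _) (fun n => ?_) h1
    have : ‖star (W n) x‖ ≤ ‖x‖ := by
      simpa only [one_mul] using (star (W n)).le_of_opNorm_le ((norm_star (W n)).trans_le (hb n)) x
    rw [norm_sub_sq (𝕜 := ℂ), norm_star_apply hU, ContinuousLinearMap.star_eq_adjoint (W n),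
      ContinuousLinearMap.adjoint_inner_left, ← ContinuousLinearMap.star_eq_adjoint]
    nlinarith [norm_nonneg (star (W n) x), norm_nonneg x]
  rw [tendsto_iff_norm_sub_tendsto_zero]
  simpa using h2.sqrt

/-- At a limit `U = 0` the adjoints need not converge strongly, but there they act on vectors that
tend to `0`, and a uniform bound is enough. -/
lemma tendsto_transport {W A : ℕ → H →L[ℂ] H} {U B : H →L[ℂ] H} (hU : U * star U = 1 ∨ U = 0)
    (hb : ∀ n, ‖W n‖ ≤ 1) (hW : ∀ x, Tendsto (fun n => W n x) atTop (nhds (U x)))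
    (hA : ∀ x, Tendsto (fun n => A n x) atTop (nhds (B x))) (x : H) :
    Tendsto (fun n => transport (W n) (A n) x) atTop (nhds (transport U B x)) := by
  obtain ⟨C, hC⟩ : ∃ C, ∀ n, ‖A n‖ ≤ C := by
    refine banach_steinhaus fun x => ?_
    obtain ⟨C, hC⟩ := (hA x).norm.bddAbove_range
    exact ⟨C, fun n => hC ⟨n, rfl⟩⟩
  have hAW := tendsto_apply_of_bounded hC (hA (U x)) (hW x)
  have hb' : ∀ n, ‖star (W n)‖ ≤ 1 := fun n => by rw [norm_star]; exact hb n
  have key : ∀ (y : ℕ → H) (z : H), Tendsto y atTop (nhds z) → (U = 0 → z = 0) →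
      Tendsto (fun n => star (W n) (y n)) atTop (nhds (star U z)) := by
    intro y z hy hz
    refine tendsto_apply_of_bounded hb' ?_ hy
    rcases hU with hU | hU
    · exact tendsto_star_apply hU hb hW z
    · simp [hz hU]
  have h1 := key _ _ hAW (fun h => by simp [h])
  have h2 := key _ _ (hW x) (fun h => by simp [h])
  simpa [transport] using h1.add (h2.const_sub x)

end Abstract

/-! ### Dilations of `L²((0,1); ℂ)` -/

section Dilation

local notation "μI" => MeasureTheory.volume.restrict (Set.Ioo (0:ℝ) 1)

/-- The dilation `x ↦ √c f(c x)` of the extension by zero of `f|(0,1)` to the real line. It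
vanishes for `c ≤ 0`, where `√c = 0`. -/
noncomputable def dil (c : ℝ) (f : ℝ → ℂ) (x : ℝ) : ℂ :=
  (√c : ℂ) * (Set.Ioo (0:ℝ) 1).indicator f (c * x)

lemma dil_of_nonpos {c : ℝ} (hc : c ≤ 0) (f : ℝ → ℂ) : dil c f = 0 := by
  ext x; simp [dil, Real.sqrt_eq_zero_of_nonpos hc]

lemma dil_congr (c : ℝ) {f g : ℝ → ℂ} (h : f =ᵐ[μI] g) : dil c f =ᵐ[volume] dil c g := by
  rcases le_or_gt c 0 with hc | hc
  · rw [dil_of_nonpos hc, dil_of_nonpos hc]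
  have h1 := (ae_restrict_iff' measurableSet_Ioo).1 h
  have hq : Measure.QuasiMeasurePreserving (fun x : ℝ => c * x) volume volume := by
    refine ⟨measurable_const_mul c, ?_⟩
    rw [Real.map_volume_mul_left hc.ne']
    exact Measure.smul_absolutelyContinuous
  filter_upwards [hq.ae h1] with x hx
  unfold dil
  by_cases hm : c * x ∈ Set.Ioo (0:ℝ) 1
  · simp [Set.indicator_of_mem hm, hx hm]
  · simp [Set.indicator_of_notMem hm]

/-- The factor `√c` makes dilation an isometry of `L²(ℝ)` when `0 < c`. -/
lemma dil_memLp (c : ℝ) {f : ℝ → ℂ} (hf : MemLp f 2 μI) :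
    MemLp (dil c f) 2 volume ∧ eLpNorm (dil c f) 2 volume ≤ eLpNorm f 2 μI := by
  rcases le_or_gt c 0 with hc | hc
  · rw [dil_of_nonpos hc]; simp
  set F := (Set.Ioo (0:ℝ) 1).indicator f with hF
  have hFm : MemLp F 2 volume := (memLp_indicator_iff_restrict measurableSet_Ioo).2 hf
  have hmap := Real.map_volume_mul_left hc.ne'
  have hFm' : MemLp F 2 (Measure.map (fun x => c * x) volume) := by
    rw [hmap]; exact hFm.smul_measure ENNReal.ofReal_ne_top
  have hcomp : MemLp (fun x => F (c * x)) 2 volume :=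
    hFm'.comp_of_map (measurable_const_mul c).aemeasurable
  have hn : eLpNorm (fun x => F (c * x)) 2 volume
      = ENNReal.ofReal |c⁻¹| ^ (1 / (2:ENNReal)).toReal • eLpNorm F 2 volume := by
    rw [← eLpNorm_smul_measure_of_ne_top (by simp), ← hmap,
      eLpNorm_map_measure hFm'.1 (measurable_const_mul c).aemeasurable]
    rfl
  refine ⟨hcomp.const_mul _, ?_⟩
  have : dil c f = (√c : ℂ) • (fun x => F (c * x)) := rfl
  rw [this, eLpNorm_const_smul, hn, eLpNorm_indicator_eq_eLpNorm_restrict measurableSet_Ioo,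
    smul_eq_mul, ← mul_assoc]
  refine mul_le_of_le_one_left' (le_of_eq ?_)
  have e : ‖(√c : ℂ)‖ₑ = ENNReal.ofReal √c := by
    rw [← ofReal_norm]; simp [abs_of_nonneg (Real.sqrt_nonneg c)]
  rw [e, ENNReal.ofReal_rpow_of_nonneg (abs_nonneg _) (by positivity),
    ← ENNReal.ofReal_mul (Real.sqrt_nonneg _), abs_of_pos (inv_pos.2 hc)]
  have : ((1:ENNReal) / 2).toReal = 1 / 2 := by simp
  rw [this, ← Real.sqrt_eq_rpow, ← Real.sqrt_mul hc.le, mul_inv_cancel₀ hc.ne']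
  simp

lemma dil_memLp_restrict (c : ℝ) {f : ℝ → ℂ} (hf : MemLp f 2 μI) :
    MemLp (dil c f) 2 μI := (dil_memLp c hf).1.restrict _

lemma norm_toLp_dil_le (c : ℝ) {f : ℝ → ℂ} (hf : MemLp f 2 μI) :
    ‖(dil_memLp_restrict c hf).toLp‖ ≤ ‖hf.toLp‖ := by
  rw [Lp.norm_toLp, Lp.norm_toLp]
  exact ENNReal.toReal_mono hf.2.ne
    ((eLpNorm_mono_measure _ Measure.restrict_le_self).trans (dil_memLp c hf).2)

/-- The contraction `f ↦ (√c f(c ·))|(0,1)` of `L²((0,1); ℂ)`, where `f` is extended by zero; it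
is a coisometry for `0 < c ≤ 1`, and `0` for `c ≤ 0`. -/
noncomputable def dilation (c : ℝ) : Hsp →L[ℂ] Hsp :=
  LinearMap.mkContinuous
    { toFun := fun f => (dil_memLp_restrict c (Lp.memLp f)).toLp
      map_add' := fun f g => by
        rw [← MemLp.toLp_add]
        refine MemLp.toLp_congr _ _ ?_
        refine EventuallyEq.trans (ae_restrict_of_ae (dil_congr c (Lp.coeFn_add f g))) ?_
        refine Eventually.of_forall fun x => ?_
        simp [dil, Set.indicator_add', mul_add]
      map_smul' := fun a f => by
        rw [RingHom.id_apply, ← MemLp.toLp_const_smul]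
        refine MemLp.toLp_congr _ _ ?_
        refine EventuallyEq.trans (ae_restrict_of_ae (dil_congr c (Lp.coeFn_smul a f))) ?_
        refine Eventually.of_forall fun x => ?_
        simp only [dil, Pi.smul_apply, smul_eq_mul, Pi.smul_def,
          Set.indicator_const_mul]
        ring }
    1 (fun f => by
      have := norm_toLp_dil_le c (Lp.memLp f)
      rw [Lp.toLp_coeFn] at this
      rw [one_mul]
      exact this)

lemma norm_dilation_le (c : ℝ) : ‖dilation c‖ ≤ 1 :=
  LinearMap.mkContinuous_norm_le _ zero_le_one _

lemma dilation_toLp (c : ℝ) {f : ℝ → ℂ} (hf : MemLp f 2 μI) :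
    dilation c hf.toLp = (dil_memLp_restrict c hf).toLp :=
  MemLp.toLp_congr (dil_memLp_restrict c (Lp.memLp _)) _
    (ae_restrict_of_ae (dil_congr c hf.coeFn_toLp))

lemma dilation_toLp_eq {c : ℝ} {f g : ℝ → ℂ} (hf : MemLp f 2 μI) (hg : MemLp g 2 μI)
    (h : ∀ x ∈ Set.Ioo (0:ℝ) 1, dil c f x = g x) : dilation c hf.toLp = hg.toLp := by
  rw [dilation_toLp]
  exact MemLp.toLp_congr _ _ ((ae_restrict_iff' measurableSet_Ioo).2 (Eventually.of_forall h))

lemma dilation_zero : dilation 0 = 0 := by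
  ext1 f
  have h := dilation_toLp 0 (Lp.memLp f)
  rw [Lp.toLp_coeFn] at h
  rw [h]
  exact (MemLp.toLp_congr _ (MemLp.zero' (ε := ℂ)) (by rw [dil_of_nonpos le_rfl]; rfl)).trans
    (MemLp.toLp_zero _)

lemma dilation_one : dilation 1 = 1 := by
  ext1 f
  have h := dilation_toLp_eq (c := 1) (Lp.memLp f) (Lp.memLp f) (fun x hx => by
    simp [dil, Set.indicator_of_mem hx])
  simpa [Lp.toLp_coeFn] using h

/-- The preimage of `f` under `dilation c` required by `mul_star_eq_one` is the dilation of `f` by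
`c⁻¹`, supported in `(0, c)`. -/
lemma dilation_mul_star {c : ℝ} (hc : c ∈ Set.Ioc (0:ℝ) 1) :
    dilation c * star (dilation c) = 1 := by
  refine mul_star_eq_one (norm_dilation_le c) fun f => ?_
  refine ⟨(dil_memLp_restrict c⁻¹ (Lp.memLp f)).toLp, ?_, ?_⟩
  · have := norm_toLp_dil_le c⁻¹ (Lp.memLp f)
    rwa [Lp.toLp_coeFn f] at this
  · refine (dilation_toLp_eq _ (Lp.memLp f) fun x hx => ?_).trans (Lp.toLp_coeFn f _)
    have hm : c * x ∈ Set.Ioo (0:ℝ) 1 :=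
      ⟨mul_pos hc.1 hx.1, by nlinarith [hc.1, hc.2, hx.1, hx.2]⟩
    have hs : (√c : ℂ) * (√c⁻¹ : ℂ) = 1 := by
      rw [← Complex.ofReal_mul, ← Real.sqrt_mul hc.1.le, mul_inv_cancel₀ hc.1.ne']; simp
    rw [dil, Set.indicator_of_mem hm, dil, inv_mul_cancel_left₀ hc.1.ne', Set.indicator_of_mem hx,
      ← mul_assoc, hs, one_mul]

/-- Strong continuity of `c ↦ dilation c` on `[0, 1]`, including `c = 0`. On bounded continuous
functions it is dominated convergence; these are dense and the dilations are contractions. -/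
lemma tendsto_dilation {s : ℕ → ℝ} {t : ℝ} (hs : ∀ n, s n ∈ Set.Icc (0:ℝ) 1)
    (ht : t ∈ Set.Icc (0:ℝ) 1) (hst : Tendsto s atTop (nhds t)) (f : Hsp) :
    Tendsto (fun n => dilation (s n) f) atTop (nhds (dilation t f)) := by
  refine tendsto_of_dense (fun n => norm_dilation_le _) (norm_dilation_le _)
    (BoundedContinuousFunction.toLp_denseRange (p := 2) ℂ μI ℂ (by simp)) ?_ f
  rintro _ ⟨g, rfl⟩
  set F : ℝ → ℝ → ℂ := fun c x => (√c : ℂ) * g (c * x) with hF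
  have hFc : Continuous (fun p : ℝ × ℝ => F p.1 p.2) := by fun_prop
  have hFb : ∀ c ∈ Set.Icc (0:ℝ) 1, ∀ x, ‖F c x‖ ≤ ‖g‖ := fun c hc x => by
    have h1 : √c ≤ 1 := Real.sqrt_le_one.2 hc.2
    rw [hF, norm_mul, Complex.norm_real, Real.norm_of_nonneg (Real.sqrt_nonneg c)]
    exact (mul_le_of_le_one_left (norm_nonneg _) h1).trans (g.norm_coe_le_norm _)
  have hFs : ∀ c, Continuous (F c) := fun c => by fun_prop
  have hFm : ∀ c ∈ Set.Icc (0:ℝ) 1, MemLp (F c) 2 μI := fun c hc =>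
    MemLp.of_bound (hFs c).aestronglyMeasurable ‖g‖ (Eventually.of_forall (hFb c hc))
  have hgm : MemLp g 2 μI := MemLp.of_bound g.continuous.aestronglyMeasurable ‖g‖
    (Eventually.of_forall g.norm_coe_le_norm)
  have hgL : BoundedContinuousFunction.toLp 2 μI ℂ g = hgm.toLp := rfl
  have hW : ∀ c (hc : c ∈ Set.Icc (0:ℝ) 1), dilation c hgm.toLp = (hFm c hc).toLp := by
    intro c hc
    refine dilation_toLp_eq _ _ fun x hx => ?_
    rcases hc.1.eq_or_lt with h0 | h0
    · simp [dil, hF, ← h0]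
    · have hm : c * x ∈ Set.Ioo (0:ℝ) 1 :=
        ⟨mul_pos h0 hx.1, by nlinarith [hc.2, hx.1, hx.2]⟩
      simp only [dil, hF, Set.indicator_of_mem hm]
  rw [hgL, hW t ht]
  simp_rw [fun n => hW (s n) (hs n)]
  rw [Lp.tendsto_Lp_iff_tendsto_eLpNorm'']
  have hlim : Tendsto (fun n => ∫⁻ x, ‖(F (s n) - F t) x‖ₑ ^ (2:ℝ) ∂μI) atTop
      (nhds (∫⁻ _, 0 ∂μI)) := by
    refine tendsto_lintegral_of_dominated_convergence
      (fun _ => (ENNReal.ofReal (‖g‖ + ‖g‖)) ^ (2:ℝ)) (fun n => ?_) (fun n => ?_) ?_ ?_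
    · exact (((hFs _).sub (hFs _)).measurable.enorm).pow_const _
    · refine Eventually.of_forall fun x => ?_
      refine ENNReal.rpow_le_rpow ?_ (by norm_num)
      rw [← ofReal_norm]
      exact ENNReal.ofReal_le_ofReal
        ((norm_sub_le _ _).trans (add_le_add (hFb _ (hs n) x) (hFb _ ht x)))
    · simp [lintegral_const]
    · refine Eventually.of_forall fun x => ?_
      have h1 : Tendsto (fun n => F (s n) x - F t x) atTop (nhds 0) := by
        have : Continuous (fun c => F c x) := by fun_prop
        simpa using ((this.tendsto t).comp hst).sub_const (F t x)
      have h2 := (ENNReal.continuous_rpow_const (y := (2:ℝ))).tendsto 0 |>.comp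
        (by simpa using h1.enorm)
      simpa [Function.comp_def] using h2
  have hlim2 := (ENNReal.continuous_rpow_const (y := (1/2:ℝ))).tendsto _ |>.comp hlim
  simp only [lintegral_zero] at hlim2
  rw [ENNReal.zero_rpow_of_pos (by norm_num)] at hlim2
  refine hlim2.congr fun n => ?_
  rw [eLpNorm_eq_lintegral_rpow_enorm_toReal (by simp) (by simp)]
  simp

end Dilation

end ContractingHomotopy

/-- The contracting homotopy underlying Proposition A2.1, on `H = L²((0,1); ℂ)`:
a family `h t : B(H) → B(H)`, `t ∈ [0,1]`, with `h 1 = id`, `h 0 = 1`, multiplicative,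
`*`-preserving and unital for `t ∈ (0,1]`, norm bound `‖h t A‖ ≤ max ‖A‖ 1`, carrying
`1 + compact` to `1 + compact`, and jointly sequentially continuous for the strong
operator topology. -/
theorem stmt_3 :
    ∃ h : ℝ → (Hsp →L[ℂ] Hsp) → (Hsp →L[ℂ] Hsp),
      (∀ A, h 1 A = A) ∧
      (∀ A, h 0 A = 1) ∧
      (∀ t ∈ Set.Ioc (0:ℝ) 1, ∀ A B, h t (A * B) = h t A * h t B) ∧
      (∀ t ∈ Set.Ioc (0:ℝ) 1, ∀ A, h t (star A) = star (h t A)) ∧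
      (∀ t ∈ Set.Ioc (0:ℝ) 1, h t 1 = 1) ∧
      (∀ t ∈ Set.Ioc (0:ℝ) 1, ∀ A, ‖h t A‖ ≤ max ‖A‖ 1) ∧
      (∀ t ∈ Set.Ioc (0:ℝ) 1, ∀ K : Hsp →L[ℂ] Hsp, IsCompactOperator (⇑K) →
        IsCompactOperator (⇑(h t (1 + K) - 1))) ∧
      (∀ (Aseq : ℕ → Hsp →L[ℂ] Hsp) (A : Hsp →L[ℂ] Hsp) (tseq : ℕ → ℝ) (t : ℝ),
        (∀ n, tseq n ∈ Set.Icc (0:ℝ) 1) → t ∈ Set.Icc (0:ℝ) 1 →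
        (∀ ξ, Tendsto (fun n => Aseq n ξ) atTop (nhds (A ξ))) →
        Tendsto tseq atTop (nhds t) →
        ∀ ξ, Tendsto (fun n => h (tseq n) (Aseq n) ξ) atTop (nhds (h t A ξ))) := by
  open ContractingHomotopy in
  refine ⟨fun t A => transport (dilation t) A, fun A => ?_, fun A => ?_,
    fun t ht A B => transport_mul (dilation_mul_star ht) A B,
    fun t _ A => transport_star _ A, fun t _ => transport_one _,
    fun t ht A => norm_transport_le (dilation_mul_star ht) A,
    fun t _ K hK => transport_compact _ K hK, fun As A ts t hts ht hA hst ξ => ?_⟩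
  · simp [transport, dilation_one]
  · simp [transport, dilation_zero]
  · refine tendsto_transport ?_ (fun n => norm_dilation_le _)
      (tendsto_dilation hts ht hst) hA ξ
    rcases ht.1.eq_or_lt with h0 | h0
    · exact Or.inr (h0 ▸ dilation_zero)
    · exact Or.inl (dilation_mul_star ⟨h0, ht.2⟩)
end

section
/- Let H be an infinite-dimensional separable complex Hilbert space and X a metrizable topological space. Let f : X → B(H) be a map such that f(x) is unitary for every x and x ↦ f(x)ξ is continuous for every ξ ∈ H. Then there exists F : X × [0,1] → B(H) such that F(x,t) is unitary for all (x,t), F(x,1) = f(x), F(x,0) = 1, and for every ξ ∈ H the map (x,t) ↦ F(x,t)ξ is continuous. (The unitary group of H is contractible in the strong operator topology: the unitary part of Proposition A2.1.) -/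
/-!
The contraction is obtained by compressing unitaries to smaller and smaller subspaces
(Dixmier and Douady). If `v` is an isometry and `u` a unitary, then `v u v* + (1 - v v*)` is a
unitary (`conj_mem_unitary`): it is a copy of `u` on the range of `v` and the identity on the
orthogonal complement of that range. It is `u` for `v = 1`, and it is close to `1` at `ξ` as soon
as `v* ξ` is small, uniformly in `u`. So it suffices to find a path of isometries `v t`,
`0 < t ≤ 1`, with `v 1 = 1`, such that `v t` and its adjoint depend strongly continuously on `t`
and `(v t)* → 0` strongly as `t → 0`.

All infinite-dimensional separable Hilbert spaces are isomorphic, so the path may be constructed on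
`L²([0, ∞))`, the subspace `K` of `L²(ℝ)`. There, right translations `V s`, `s ≥ 0`, are isometries
with `V 0 = 1`. Strong continuity is the continuity of translations in `L²(ℝ)`. The adjoint of
`V s` translates to the left and cuts off at zero; it kills every function with support in
`[0, R]` once `s > R`, and such functions are dense, so `(V s)* → 0` strongly as `s → ∞`
(`exists_semigroup`). The path is `v t = V (t⁻¹ - 1)`.
-/

open unitInterval

open MeasureTheory Filter Topology ContinuousLinearMap
open scoped InnerProductSpace lp

namespace UnitaryContraction

/-! ### Classification of separable Hilbert spaces -/

lemma countable_hilbertBasis {H : Type*} [NormedAddCommGroup H] [InnerProductSpace ℂ H]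
    [TopologicalSpace.SeparableSpace H] {ι : Type*} (b : HilbertBasis ι ℂ H) : Countable ι := by
  have ho := b.orthonormal
  have hd : DiscreteTopology (Set.range b) := by
    refine DiscreteTopology.of_forall_le_dist (r := 1) one_pos ?_
    rintro ⟨_, i, rfl⟩ ⟨_, j, rfl⟩ hne
    have hij : i ≠ j := by rintro rfl; exact hne rfl
    have h2 := norm_sub_sq (𝕜 := ℂ) (b i) (b j)
    rw [ho.1 i, ho.1 j, ho.2 hij] at h2
    rw [Subtype.dist_eq, dist_eq_norm]
    norm_num at h2
    nlinarith [norm_nonneg (b i - b j)]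
  have : SecondCountableTopology H := UniformSpace.secondCountable_of_separable H
  have : Countable (Set.range b) := TopologicalSpace.separableSpace_iff_countable.1 inferInstance
  exact (Set.rangeFactorization_injective.2 ho.linearIndependent.injective).countable

lemma nonempty_linearIsometryEquiv_l2 {H : Type*} [NormedAddCommGroup H] [InnerProductSpace ℂ H]
    [CompleteSpace H] [TopologicalSpace.SeparableSpace H] (hinf : ¬ FiniteDimensional ℂ H) :
    Nonempty (H ≃ₗᵢ[ℂ] ℓ²(ℕ, ℂ)) := by
  obtain ⟨w, b, -⟩ := exists_hilbertBasis ℂ H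
  have hc := countable_hilbertBasis b
  have hi : Infinite w := by
    by_contra h
    have : Finite w := not_infinite_iff_finite.1 h
    have := Fintype.ofFinite w
    exact hinf (b.toOrthonormalBasis.toBasis.finiteDimensional_of_finite)
  obtain ⟨e⟩ := nonempty_equiv_of_countable (α := ℕ) (β := w)
  have ho : Orthonormal ℂ (b ∘ e) := b.orthonormal.comp e e.injective
  have hs : Set.range (b ∘ e) = Set.range b := e.surjective.range_comp b
  exact ⟨(HilbertBasis.mk ho (by rw [hs]; exact b.dense_span.ge)).repr⟩

/-! ### Translations of the line -/

/-- The Hilbert space `L²(ℝ)`. -/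
abbrev E : Type := Lp ℂ 2 (volume : Measure ℝ)

/-- Translation by `s` on `L²(ℝ)`: `(U s g)(x) = g (x - s)`. -/
noncomputable def U (s : ℝ) : E →ₗᵢ[ℂ] E :=
  Lp.compMeasurePreservingₗᵢ ℂ (fun x => x - s) (measurePreserving_sub_right volume s)

lemma U_coeFn (s : ℝ) (g : E) : U s g =ᵐ[volume] fun x => g (x - s) :=
  Lp.coeFn_compMeasurePreserving g (measurePreserving_sub_right volume s)

lemma U_U_neg (s : ℝ) (g : E) : U s (U (-s) g) = g := by
  apply Lp.ext
  have h := (measurePreserving_sub_right volume s).quasiMeasurePreserving.ae_eq_comp (U_coeFn (-s) g)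
  filter_upwards [U_coeFn s (U (-s) g), h] with x h1 h2
  simpa [h1] using h2

lemma U_zero (g : E) : U 0 g = g := by
  apply Lp.ext
  filter_upwards [U_coeFn 0 g] with x h1
  simpa using h1

lemma inner_U (s : ℝ) (g h : E) : ⟪U s g, h⟫_ℂ = ⟪g, U (-s) h⟫_ℂ := by
  conv_lhs => rw [← U_U_neg s h]
  exact (U s).inner_map_map _ _

lemma continuous_U (g : E) : Continuous fun s => U s g := by
  let c : C(ℝ, C(ℝ, ℝ)) :=
    (ContinuousMap.mk (fun a : ℝ × ℝ => a.2 - a.1) (by fun_prop)).curry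
  exact (continuous_const (y := g)).compMeasurePreservingLp c.continuous
    (fun s => measurePreserving_sub_right volume s) (by norm_num)

/-- The functions in `L²(ℝ)` supported on `[0, ∞)`, as the kernel of restriction to `(-∞, 0)`. -/
noncomputable def K : Submodule ℂ E :=
  (LpToLpRestrictCLM ℝ ℂ ℂ volume 2 (Set.Iio 0)).ker

lemma mem_K {g : E} : g ∈ K ↔ ∀ᵐ x, x < 0 → g x = 0 := by
  have h := LpToLpRestrictCLM_coeFn (μ := (volume : Measure ℝ)) (p := 2) ℂ (Set.Iio (0 : ℝ)) g
  rw [K, LinearMap.mem_ker, Lp.eq_zero_iff_ae_eq_zero]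
  have h2 := ae_restrict_iff' (μ := (volume : Measure ℝ)) (p := fun x => g x = 0)
    (measurableSet_Iio (a := (0 : ℝ)))
  refine Iff.trans ?_ h2
  exact ⟨fun h' => h.symm.trans h', fun h' => h.trans h'⟩

instance : CompleteSpace K :=
  (ContinuousLinearMap.isClosed_ker (LpToLpRestrictCLM ℝ ℂ ℂ volume 2 (Set.Iio 0))).completeSpace_coe

lemma U_mem_K {s : ℝ} (hs : 0 ≤ s) {g : E} (hg : g ∈ K) : U s g ∈ K := by
  rw [mem_K] at *
  have h := (measurePreserving_sub_right volume s).quasiMeasurePreserving.ae hg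
  filter_upwards [U_coeFn s g, h] with x h1 h2 hx
  rw [h1]
  exact h2 (by linarith)

lemma K_ne_bot : K ≠ ⊥ := by
  intro h
  let g : E := indicatorConstLp 2 (measurableSet_Icc (a := (0 : ℝ)) (b := 1)) (by simp) (1 : ℂ)
  have hg : g ∈ K := by
    rw [mem_K]
    filter_upwards [indicatorConstLp_coeFn (p := 2) (hs := measurableSet_Icc (a := (0 : ℝ)) (b := 1))
      (hμs := by simp) (c := (1 : ℂ)) (μ := volume)] with x hx h0
    rw [hx, Set.indicator_of_notMem]
    simp [h0]
  rw [h, Submodule.mem_bot] at hg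
  have : ‖g‖ = 1 := by
    rw [norm_indicatorConstLp (by norm_num) (by norm_num)]
    simp
  rw [hg] at this
  simp at this

/-- Once translated far enough to the left, a function whose support is bounded above is
orthogonal to the functions supported on `[0, ∞)`. -/
lemma inner_U_neg_eq_zero {g h : E} {R s : ℝ} (hg : g ∈ K) (hh : ∀ᵐ x, R < x → h x = 0)
    (hs : R < s) : ⟪g, U (-s) h⟫_ℂ = 0 := by
  rw [L2.inner_def]
  refine integral_eq_zero_of_ae ?_
  have h' := (measurePreserving_sub_right volume (-s)).quasiMeasurePreserving.ae hh
  filter_upwards [U_coeFn (-s) h, h', mem_K.1 hg] with x h1 h2 h3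
  rcases lt_or_ge x 0 with hx | hx
  · simp [h3 hx]
  · simp only [h1]
    rw [h2 (by linarith)]
    simp

lemma exists_approx (g : E) {ε : ℝ} (hε : 0 < ε) :
    ∃ h : E, (∃ R : ℝ, ∀ᵐ x, R < x → h x = 0) ∧ ‖g - h‖ ≤ ε := by
  obtain ⟨h, hc, hle, -, hm⟩ := (Lp.memLp g).exists_hasCompactSupport_eLpNorm_sub_le (by norm_num)
    (ε := ENNReal.ofReal ε) (by simpa using hε)
  refine ⟨hm.toLp h, ?_, ?_⟩
  · obtain ⟨R, hR⟩ := hc.isCompact.bddAbove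
    refine ⟨R, ?_⟩
    filter_upwards [hm.coeFn_toLp] with x hx hRx
    rw [hx]
    exact image_eq_zero_of_notMem_tsupport fun hmem => absurd (hR hmem) (not_le.2 hRx)
  · rw [Lp.norm_def]
    refine ENNReal.toReal_le_of_le_ofReal hε.le ?_
    refine le_trans (le_of_eq (eLpNorm_congr_ae ?_)) hle
    filter_upwards [Lp.coeFn_sub g (hm.toLp h), hm.coeFn_toLp] with x h1 h2
    rw [h1, Pi.sub_apply, Pi.sub_apply, h2]

/-! ### A semigroup of isometries on a separable Hilbert space -/

/-- A Hilbert space identified by `J` with `L²([0, ∞))` carries the right translations `V s`,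
compressed to the half-line; `star (V s)` is the compression of the left translation by `s`. -/
lemma exists_semigroup_of_isometry {H : Type*} [NormedAddCommGroup H] [InnerProductSpace ℂ H]
    [CompleteSpace H] (J : H →ₗᵢ[ℂ] E) (hJ : J.toLinearMap.range = K) :
    ∃ V : ℝ → H →L[ℂ] H, V 0 = 1 ∧ (∀ s, 0 ≤ s → star (V s) * V s = 1) ∧
      (∀ ξ, Continuous fun s => V s ξ) ∧ (∀ ξ, Continuous fun s => star (V s) ξ) ∧
      (∀ ξ, Tendsto (fun s => star (V s) ξ) atTop (𝓝 0)) := by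
  set A : E →L[ℂ] H := adjoint J.toContinuousLinearMap with hA
  have hAJ : ∀ ξ, A (J ξ) = ξ := fun ξ => by
    refine ext_inner_left ℂ fun η => ?_
    rw [hA, adjoint_inner_right]
    exact J.inner_map_map _ _
  have hJK : ∀ ξ, J ξ ∈ K := fun ξ => hJ ▸ LinearMap.mem_range_self J.toLinearMap ξ
  have hJA : ∀ g ∈ K, J (A g) = g := fun g hg => by
    obtain ⟨ξ, rfl⟩ : ∃ ξ, J ξ = g := by rw [← hJ] at hg; exact hg
    rw [hAJ]
  have hAle : ∀ g, ‖A g‖ ≤ ‖g‖ := fun g => by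
    have h1 : ‖A‖ ≤ 1 := by
      rw [hA, LinearIsometryEquiv.norm_map]
      exact J.norm_toContinuousLinearMap_le
    simpa using A.le_of_opNorm_le h1 g
  let V : ℝ → H →L[ℂ] H := fun s => A ∘L (U s).toContinuousLinearMap ∘L J.toContinuousLinearMap
  have hV : ∀ s ξ, V s ξ = A (U s (J ξ)) := fun _ _ => rfl
  have hW : ∀ s ξ, star (V s) ξ = A (U (-s) (J ξ)) := fun s ξ => by
    refine ext_inner_left ℂ fun η => ?_
    rw [star_eq_adjoint, adjoint_inner_right, hV, hA, adjoint_inner_left, adjoint_inner_right]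
    exact inner_U s (J η) (J ξ)
  refine ⟨V, ?_, fun s hs => ?_, fun ξ => ?_, fun ξ => ?_, fun ξ => ?_⟩
  · ext ξ
    simp [hV, U_zero, hAJ]
  · ext ξ
    have := U_U_neg (-s) (J ξ)
    rw [neg_neg] at this
    rw [mul_apply_eq_comp, hW, hV, hJA _ (U_mem_K hs (hJK ξ)), this, hAJ, one_apply_eq_self]
  · simp only [hV]
    exact A.continuous.comp (continuous_U _)
  · simp only [hW]
    exact A.continuous.comp ((continuous_U _).comp continuous_neg)
  · simp only [hW]
    rw [Metric.tendsto_atTop]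
    intro ε hε
    obtain ⟨h, ⟨R, hR⟩, hgh⟩ := exists_approx (J ξ) (half_pos hε)
    refine ⟨R + 1, fun s hs => ?_⟩
    have h0 : A (U (-s) h) = 0 := by
      refine ext_inner_left ℂ fun η => ?_
      rw [hA, adjoint_inner_right, inner_zero_right]
      exact inner_U_neg_eq_zero (hJK η) hR (by linarith)
    have h1 : A (U (-s) (J ξ)) = A (U (-s) (J ξ - h)) := by
      rw [map_sub, map_sub, h0, sub_zero]
    rw [dist_zero_right, h1]
    calc _ ≤ ‖U (-s) (J ξ - h)‖ := hAle _
      _ = ‖J ξ - h‖ := (U (-s)).norm_map _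
      _ < ε := by linarith

/-- If `L²([0, ∞))` were finite-dimensional, the isometries `V s` would be unitary, so that
`star (V s)` could not tend to zero. -/
lemma not_finiteDimensional_K : ¬ FiniteDimensional ℂ K := by
  intro hfin
  obtain ⟨V, -, hiso, -, -, hlim⟩ :=
    exists_semigroup_of_isometry K.subtypeₗᵢ (by ext; simp)
  obtain ⟨g, hgK, hg⟩ := K.ne_bot_iff.1 K_ne_bot
  have hsurj : ∀ s, 0 ≤ s → V s * star (V s) = 1 := fun s hs => by
    have h := congrArg ContinuousLinearMap.toLinearMap (hiso s hs)
    have h2 := mul_eq_one_comm.1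
      (show (star (V s)).toLinearMap * (V s).toLinearMap = 1 from h)
    exact ContinuousLinearMap.coe_injective h2
  have hnorm : ∀ s, 0 ≤ s → ‖star (V s) ⟨g, hgK⟩‖ = ‖g‖ := fun s hs => by
    refine norm_map_of_mem_unitary (u := star (V s)) ?_ _
    exact Unitary.star_mem (Unitary.mem_iff.2 ⟨hiso s hs, hsurj s hs⟩)
  have h1 := (hlim ⟨g, hgK⟩).norm
  have h2 : Tendsto (fun s => ‖star (V s) ⟨g, hgK⟩‖) atTop (𝓝 ‖g‖) :=
    tendsto_const_nhds.congr' (by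
      filter_upwards [eventually_ge_atTop 0] with s hs using (hnorm s hs).symm)
  have := tendsto_nhds_unique h1 h2
  rw [norm_zero] at this
  exact hg (norm_eq_zero.1 this.symm)

lemma exists_semigroup {H : Type*} [NormedAddCommGroup H] [InnerProductSpace ℂ H]
    [CompleteSpace H] [TopologicalSpace.SeparableSpace H] (hinf : ¬ FiniteDimensional ℂ H) :
    ∃ V : ℝ → H →L[ℂ] H, V 0 = 1 ∧ (∀ s, 0 ≤ s → star (V s) * V s = 1) ∧
      (∀ ξ, Continuous fun s => V s ξ) ∧ (∀ ξ, Continuous fun s => star (V s) ξ) ∧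
      (∀ ξ, Tendsto (fun s => star (V s) ξ) atTop (𝓝 0)) := by
  have : Fact ((2 : ENNReal) ≠ ⊤) := ⟨by norm_num⟩
  have : SecondCountableTopology E := inferInstance
  obtain ⟨e⟩ := nonempty_linearIsometryEquiv_l2 hinf
  obtain ⟨e'⟩ := nonempty_linearIsometryEquiv_l2 not_finiteDimensional_K
  refine exists_semigroup_of_isometry (K.subtypeₗᵢ.comp (e.trans e'.symm).toLinearIsometry) ?_
  ext g
  constructor
  · rintro ⟨ξ, rfl⟩
    exact ((e.trans e'.symm) ξ).2
  · intro hg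
    exact ⟨(e.trans e'.symm).symm ⟨g, hg⟩, by simp⟩

/-! ### Compressing unitaries by isometries -/

lemma conj_mem_unitary {A : Type*} [Ring A] [StarRing A] {v u : A} (hv : star v * v = 1)
    (hu : u ∈ unitary A) : v * u * star v + (1 - v * star v) ∈ unitary A := by
  have key : ∀ a b : A, a * b = 1 →
      (v * a * star v + (1 - v * star v)) * (v * b * star v + (1 - v * star v)) = 1 := by
    intro a b hab
    have h1 : ∀ c, star v * (v * c) = c := fun c => by rw [← mul_assoc, hv, one_mul]
    have h2 : ∀ c, a * (b * c) = c := fun c => by rw [← mul_assoc, hab, one_mul]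
    simp only [mul_add, add_mul, mul_sub, sub_mul, mul_assoc, h1, h2, one_mul, mul_one]
    abel
  have hs : star (v * u * star v + (1 - v * star v)) = v * star u * star v + (1 - v * star v) := by
    simp [mul_assoc]
  rw [Unitary.mem_iff, hs]
  exact ⟨key _ _ (Unitary.star_mul_self_of_mem hu), key _ _ (Unitary.mul_star_self_of_mem hu)⟩

/-- Contractions converging strongly may be applied to a convergent net of vectors. -/
lemma tendsto_apply {H α : Type*} [NormedAddCommGroup H] [InnerProductSpace ℂ H]
    {l : Filter α} {T : α → H →L[ℂ] H} {v : α → H} {T₀ : H →L[ℂ] H} {v₀ : H}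
    (hT1 : ∀ᶠ a in l, ∀ ξ, ‖T a ξ‖ ≤ ‖ξ‖) (hT : Tendsto (fun a => T a v₀) l (𝓝 (T₀ v₀)))
    (hv : Tendsto v l (𝓝 v₀)) : Tendsto (fun a => T a (v a)) l (𝓝 (T₀ v₀)) := by
  have h : Tendsto (fun a => T a (v a - v₀)) l (𝓝 0) := by
    refine squeeze_zero_norm' (hT1.mono fun a ha => ha (v a - v₀)) ?_
    simpa using (hv.sub_const v₀).norm
  simpa using h.add hT

lemma norm_apply_of_star_mul_self {H : Type*} [NormedAddCommGroup H] [InnerProductSpace ℂ H]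
    [CompleteSpace H] {v : H →L[ℂ] H} (hv : star v * v = 1) (ξ : H) : ‖v ξ‖ = ‖ξ‖ :=
  (ContinuousLinearMap.norm_map_iff_adjoint_comp_self v).2 hv ξ

end UnitaryContraction

open UnitaryContraction in
/-- The unitary part of Proposition A2.1: the unitary group of an infinite-dimensional
separable Hilbert space is contractible in the strong operator topology. -/
theorem stmt_4 {H : Type*} [NormedAddCommGroup H] [InnerProductSpace ℂ H] [CompleteSpace H]
    [TopologicalSpace.SeparableSpace H] (hinf : ¬ FiniteDimensional ℂ H)
    {X : Type*} [TopologicalSpace X] [TopologicalSpace.MetrizableSpace X]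
    (f : X → H →L[ℂ] H) (hf : ∀ x, f x ∈ unitary (H →L[ℂ] H))
    (hfSOT : ∀ ξ : H, Continuous fun x => f x ξ) :
    ∃ F : X × I → H →L[ℂ] H,
      (∀ p, F p ∈ unitary (H →L[ℂ] H)) ∧
      (∀ x, F (x, 1) = f x) ∧
      (∀ x, F (x, 0) = 1) ∧
      (∀ ξ : H, Continuous fun p => F p ξ) := by
  obtain ⟨V, hV0, hiso, hVc, hWc, hlim⟩ := exists_semigroup hinf
  -- The parameter `t ∈ (0, 1]` corresponds to the translation by `t⁻¹ - 1 ∈ [0, ∞)`.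
  let r : I → ℝ := fun t => (t : ℝ)⁻¹ - 1
  have hr : ∀ t, t ≠ 0 → 0 ≤ r t := fun t ht => by
    have : (0 : ℝ) < t := unitInterval.pos_iff_ne_zero.2 ht
    exact sub_nonneg.2 ((one_le_inv₀ this).2 t.2.2)
  -- At `t = 0`, where `t⁻¹` is a junk value, `v` is set to its limit in the sense that
  -- `star (v t)` is strongly continuous there, and the formula for `F` gives `1`.
  let v : I → H →L[ℂ] H := fun t => if t = 0 then 0 else V (r t)
  have hv0 : v 0 = 0 := if_pos rfl
  have hv : ∀ t, t ≠ 0 → v t = V (r t) := fun t ht => if_neg ht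
  have hvle : ∀ t ξ, ‖v t ξ‖ ≤ ‖ξ‖ := fun t ξ => by
    by_cases ht : t = 0
    · simp [ht, hv0]
    · rw [hv t ht, norm_apply_of_star_mul_self (hiso _ (hr t ht))]
  have hrc : ∀ t, t ≠ 0 → ContinuousAt r t := fun t ht =>
    (continuous_subtype_val.continuousAt.inv₀ (by simpa using ht)).sub continuousAt_const
  have hev : ∀ t : I, t ≠ 0 → ∀ᶠ t' in 𝓝 t, v t' = V (r t') := fun t ht =>
    mem_of_superset (isOpen_ne.mem_nhds ht) hv
  have hvc : ∀ t, t ≠ 0 → ∀ ξ, ContinuousAt (fun t => v t ξ) t := fun t ht ξ =>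
    ((hVc ξ).continuousAt.comp (hrc t ht)).congr ((hev t ht).mono fun t' h => by simp [h])
  have hwc : ∀ ξ, Continuous fun t => star (v t) ξ := fun ξ => by
    refine continuous_iff_continuousAt.2 fun t => ?_
    by_cases ht : t = 0
    · subst ht
      rw [← continuousWithinAt_compl_self]
      have h1 : Tendsto r (𝓝[≠] 0) atTop := by
        refine tendsto_atTop_add_const_right _ (-1) (tendsto_inv_nhdsGT_zero.comp ?_)
        refine tendsto_nhdsWithin_iff.2 ⟨?_, ?_⟩
        · exact (continuous_subtype_val.tendsto (0 : I)).mono_left nhdsWithin_le_nhds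
        · filter_upwards [self_mem_nhdsWithin] with t ht
          exact unitInterval.pos_iff_ne_zero.2 ht
      have h2 := (hlim ξ).comp h1
      rw [ContinuousWithinAt, hv0, star_zero, zero_apply]
      refine h2.congr' ?_
      filter_upwards [self_mem_nhdsWithin] with t ht
      simp [hv t ht]
    · exact ((hWc ξ).continuousAt.comp (hrc t ht)).congr
        ((hev t ht).mono fun t' h => by simp [h])
  refine ⟨fun p => v p.2 * f p.1 * star (v p.2) + (1 - v p.2 * star (v p.2)), ?_, ?_, ?_, ?_⟩
  · rintro ⟨x, t⟩
    by_cases ht : t = 0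
    · simp [ht, hv0]
    · exact conj_mem_unitary (by rw [hv t ht]; exact hiso _ (hr t ht)) (hf x)
  · intro x
    have : v 1 = 1 := by rw [hv 1 one_ne_zero]; simpa [r] using hV0
    simp [this]
  · intro x
    simp [hv0]
  · intro ξ
    -- Both terms have the form `v t (T x (star (v t) ξ))` with `T` a continuous unitary family.
    have key : ∀ T : X → H →L[ℂ] H, (∀ x, T x ∈ unitary (H →L[ℂ] H)) →
        (∀ ξ, Continuous fun x => T x ξ) →
        Continuous fun p : X × I => v p.2 (T p.1 (star (v p.2) ξ)) := by
      intro T hTu hTc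
      have hTn : ∀ x η, ‖T x η‖ = ‖η‖ := fun x η => norm_map_of_mem_unitary (hTu x) η
      have hws : Continuous fun p : X × I => star (v p.2) ξ := (hwc ξ).comp continuous_snd
      refine continuous_iff_continuousAt.2 fun ⟨x, t⟩ => ?_
      by_cases ht : t = 0
      · subst ht
        have h0 := (hws.tendsto (x, 0)).norm
        simp only [hv0, star_zero, zero_apply, norm_zero] at h0
        rw [ContinuousAt]
        simp only [hv0, zero_apply]
        refine squeeze_zero_norm (fun p => ?_) h0
        exact (hvle _ _).trans (hTn _ _).le
      · have h1 : Tendsto (fun p : X × I => T p.1 (star (v p.2) ξ)) (𝓝 (x, t))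
            (𝓝 (T x (star (v t) ξ))) :=
          tendsto_apply (.of_forall fun p η => (hTn p.1 η).le)
            (((hTc _).comp continuous_fst).tendsto (x, t)) (hws.tendsto (x, t))
        exact tendsto_apply (.of_forall fun p η => hvle p.2 η)
          ((hvc t ht _).tendsto.comp (continuous_snd.tendsto (x, t))) h1
    have h1 := key f hf hfSOT
    have h2 := key (fun _ => 1) (fun _ => one_mem _) (fun _ => continuous_const)
    exact h1.add ((continuous_const (y := ξ)).sub h2)
end

section
/- Let H be an infinite-dimensional separable complex Hilbert space and X a compact metrizable space. Let f : X → B(H) be a map such that f(x) is invertible in B(H) for every x, and both x ↦ f(x)ξ and x ↦ f(x)⁻¹ξ are continuous for every ξ ∈ H. Then there exists F : X × [0,1] → B(H) with F(x,t) invertible for all (x,t), F(x,1) = f(x), F(x,0) = 1, and such that for every ξ ∈ H both (x,t) ↦ F(x,t)ξ and (x,t) ↦ F(x,t)⁻¹ξ are continuous. (The general linear group GL(H) is contractible in the compact-open topology, given by the embedding g ↦ (g, g⁻¹) into the strong operator topology squared: the GL part of Proposition A2.1.) -/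
/-!
The Dixmier–Douady trick. Suppose `H` carries operators `A s`, `B s` (`s ≥ 0`), strongly continuous
in `s` and of norm at most `1`, with `B s * A s = 1`, `A 0 = B 0 = 1` and `B s → 0` strongly as
`s → ∞`. Then `A s * B s` is an idempotent and, for an operator `g`,

  `A s * g * B s + (1 - A s * B s)`

acts as a copy of `g` on the range of `A s` and as the identity on the kernel of `B s`
(`compress`). This is multiplicative in `g`, equals `g` at `s = 0`, and tends strongly to `1` as
`s → ∞`, uniformly for bounded `g`. By Banach–Steinhaus the families `f` and `f⁻¹` are bounded on
the compact space `X`, so `s = 1/t - 1` gives the required homotopy (`contraction`), whose inverse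
is the same construction applied to `f⁻¹`.

The operators `A s`, `B s` come from the right shift on a half-line
(`exists_shift`): let `T s` be translation by `s` on `L²(ℝ)`, `φ` the indicator function of
`[0, 1)`, and `K` the closed span of the `T s φ` with `s ≥ 0`. As `K` is separable and
infinite-dimensional, there is an isometry `J : H → L²(ℝ)` with range `K`; put `A s = J* T s J` and
`B s = J* T (-s) J`. The invariance of `K` under `T s`, `s ≥ 0`, gives `B s * A s = 1`, and
`J* T (-s) T r φ = 0` for `s ≥ r + 1`, since `T (r - s) φ` is then orthogonal to `K`; density gives
`B s → 0`.
-/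

open unitInterval

section

open Filter Topology MeasureTheory

namespace GLContractible

/-! ### Separable infinite-dimensional Hilbert spaces -/

section Basis

variable {E : Type*} [NormedAddCommGroup E] [InnerProductSpace ℂ E] [CompleteSpace E]
  [TopologicalSpace.SeparableSpace E]

theorem exists_hilbertBasis_nat (hinf : ¬ FiniteDimensional ℂ E) :
    Nonempty (HilbertBasis ℕ ℂ E) := by
  obtain ⟨w, b, hb⟩ := exists_hilbertBasis ℂ E
  have hdist : ∀ i j : w, i ≠ j → 1 ≤ dist (b i) (b j) := by
    intro i j hij
    have h0 : inner ℂ (b i) (b j) = 0 := b.orthonormal.2 hij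
    have h1 : ‖b i‖ = 1 := b.orthonormal.1 i
    have h2 : ‖b j‖ = 1 := b.orthonormal.1 j
    have h3 := @norm_sub_sq ℂ E _ _ _ (b i) (b j)
    rw [h0, h1, h2] at h3
    rw [dist_eq_norm]
    simp only [map_zero] at h3
    nlinarith [norm_nonneg (b i - b j)]
  have hcount : Countable w := by
    refine Pairwise.countable_of_isOpen_disjoint (s := fun i : w => Metric.ball (b i) (1 / 2))
      ?_ (fun _ => Metric.isOpen_ball) (fun i => ⟨b i, Metric.mem_ball_self (by norm_num)⟩)
    intro i j hij
    exact Metric.ball_disjoint_ball (by have := hdist i j hij; linarith)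
  have hinfw : Infinite w := by
    by_contra hfin
    rw [not_infinite_iff_finite] at hfin
    have := Fintype.ofFinite w
    exact hinf b.toOrthonormalBasis.toBasis.finiteDimensional_of_finite
  obtain ⟨e⟩ := nonempty_equiv_of_countable (α := ℕ) (β := w)
  refine ⟨HilbertBasis.mk (v := fun n => b (e n)) (b.orthonormal.comp _ e.injective) ?_⟩
  have hr : Set.range (fun n => b (e n)) = Set.range b := e.surjective.range_comp b
  rw [hr, b.dense_span]

end Basis

/-! ### Translations on `L²(ℝ)` -/

/-- The Hilbert space `L²(ℝ)`. -/
abbrev L2R : Type := Lp ℂ 2 (volume : Measure ℝ)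

/-- Translation by `s` on `L²(ℝ)`: `(T s f) x = f (x - s)`. -/
noncomputable def T (s : ℝ) : L2R →ₗᵢ[ℂ] L2R :=
  Lp.compMeasurePreservingₗᵢ ℂ (fun x => x - s) (measurePreserving_sub_right volume s)

theorem T_ae (s : ℝ) (f : L2R) : T s f =ᵐ[volume] fun x => f (x - s) :=
  Lp.coeFn_compMeasurePreserving f (measurePreserving_sub_right volume s)

theorem T_T (s t : ℝ) (f : L2R) : T s (T t f) = T (s + t) f := by
  apply Lp.ext
  have h := (measurePreserving_sub_right (volume : Measure ℝ) s).quasiMeasurePreserving.ae_eq_comp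
    (T_ae t f)
  filter_upwards [T_ae s (T t f), T_ae (s + t) f, h] with x h1 h2 h3
  simp only [Function.comp_apply] at h3
  rw [h1, h2, h3, sub_sub]

theorem T_zero (f : L2R) : T 0 f = f := by
  apply Lp.ext
  filter_upwards [T_ae 0 f] with x h1
  rw [h1, sub_zero]

theorem continuous_T (f : L2R) : Continuous fun s => T s f := by
  let g : C(ℝ, C(ℝ, ℝ)) :=
    (ContinuousMap.mk (fun a : ℝ × ℝ => a.2 - a.1) (by fun_prop)).curry
  exact (continuous_const (y := f)).compMeasurePreservingLp g.continuous
    (fun s => measurePreserving_sub_right volume s) (by norm_num)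

/-- The indicator function of `[0, 1)`, as an element of `L²(ℝ)`. -/
noncomputable def φ : L2R :=
  indicatorConstLp 2 (measurableSet_Ico (a := (0 : ℝ)) (b := 1)) (by simp) (1 : ℂ)

theorem norm_φ : ‖φ‖ = 1 := by
  rw [φ, norm_indicatorConstLp (by norm_num) (by norm_num)]
  simp

theorem inner_T_φ {a b : ℝ} (h : a + 1 ≤ b) : inner ℂ (T a φ) (T b φ) = 0 := by
  have hvol : ∀ s : ℝ, volume ((fun x : ℝ => x - s) ⁻¹' Set.Ico (0 : ℝ) 1) ≠ ⊤ := fun s => by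
    rw [(measurePreserving_sub_right volume s).measure_preimage
      measurableSet_Ico.nullMeasurableSet]
    simp
  have h1 : ∀ s : ℝ, T s φ = indicatorConstLp 2
      (measurableSet_Ico.preimage (measurePreserving_sub_right (volume : Measure ℝ) s).measurable)
      (hvol s) (1 : ℂ) := fun s => rfl
  rw [h1 a, h1 b, L2.inner_indicatorConstLp_indicatorConstLp _ _ (hvol a) (hvol b)]
  have : ((fun x => x - a) ⁻¹' Set.Ico (0 : ℝ) 1) ∩ ((fun x => x - b) ⁻¹' Set.Ico (0 : ℝ) 1)
      = ∅ := by
    ext x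
    simp only [Set.mem_inter_iff, Set.mem_preimage, Set.mem_Ico, Set.mem_empty_iff_false,
      iff_false]
    rintro ⟨⟨_, h2⟩, h3, _⟩
    linarith
  rw [this]
  simp

/-- The closed span of the translates `T s φ` with `s ≥ 0`. -/
noncomputable def K : Submodule ℂ L2R :=
  (Submodule.span ℂ {f | ∃ s : ℝ, 0 ≤ s ∧ f = T s φ}).topologicalClosure

theorem T_φ_mem_K {s : ℝ} (hs : 0 ≤ s) : T s φ ∈ K :=
  Submodule.le_topologicalClosure _ (Submodule.subset_span ⟨s, hs, rfl⟩)

theorem isClosed_K : IsClosed (K : Set L2R) := Submodule.isClosed_topologicalClosure _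

instance : CompleteSpace K := isClosed_K.completeSpace_coe

theorem K_le {S : Submodule ℂ L2R} (hS : IsClosed (S : Set L2R))
    (h : ∀ s : ℝ, 0 ≤ s → T s φ ∈ S) : K ≤ S := by
  refine Submodule.topologicalClosure_minimal _ (Submodule.span_le.2 ?_) hS
  rintro _ ⟨s, hs, rfl⟩
  exact h s hs

theorem T_mem_K {s : ℝ} (hs : 0 ≤ s) {f : L2R} (hf : f ∈ K) : T s f ∈ K := by
  have : K ≤ K.comap (T s).toLinearMap := by
    refine K_le (isClosed_K.preimage (T s).continuous) fun r hr => ?_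
    change T s (T r φ) ∈ K
    rw [T_T]
    exact T_φ_mem_K (add_nonneg hs hr)
  exact this hf

theorem inner_K_eq_zero {r : ℝ} (hr : r + 1 ≤ 0) {f : L2R} (hf : f ∈ K) :
    inner ℂ f (T r φ) = 0 := by
  have : K ≤ (Submodule.span ℂ {T r φ})ᗮ := by
    refine K_le (Submodule.isClosed_orthogonal _) fun s hs => ?_
    rw [Submodule.mem_orthogonal_singleton_iff_inner_right]
    exact inner_T_φ (hr.trans hs)
  exact (Submodule.mem_orthogonal_singleton_iff_inner_left).1 (this hf)

theorem not_finiteDimensional_K : ¬ FiniteDimensional ℂ K := by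
  intro hfd
  let v : ℕ → K := fun n => ⟨T n φ, T_φ_mem_K n.cast_nonneg⟩
  have hv : Orthonormal ℂ v := by
    refine ⟨fun n => ?_, fun m n hmn => ?_⟩
    · change ‖T n φ‖ = 1
      rw [LinearIsometry.norm_map, norm_φ]
    · change inner ℂ (T m φ) (T n φ) = 0
      rcases lt_or_gt_of_ne hmn with h | h
      · exact inner_T_φ (by exact_mod_cast h)
      · rw [inner_eq_zero_symm]
        exact inner_T_φ (by exact_mod_cast h)
  have := hv.linearIndependent.finite
  exact not_finite ℕ

/-! ### The shift semigroup on `H` -/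

section Shift

variable {H : Type*} [NormedAddCommGroup H] [InnerProductSpace ℂ H] [CompleteSpace H]

theorem exists_isometry [TopologicalSpace.SeparableSpace H] (hinf : ¬ FiniteDimensional ℂ H) :
    ∃ J : H →ₗᵢ[ℂ] L2R, ∀ f, f ∈ K ↔ ∃ ξ, J ξ = f := by
  obtain ⟨b⟩ := exists_hilbertBasis_nat hinf
  have : Fact ((2 : ENNReal) ≠ ⊤) := ⟨by norm_num⟩
  obtain ⟨c⟩ := exists_hilbertBasis_nat not_finiteDimensional_K
  refine ⟨K.subtypeₗᵢ.comp (b.repr.trans c.repr.symm).toLinearIsometry, fun f => ⟨fun hf => ?_, ?_⟩⟩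
  · exact ⟨(b.repr.trans c.repr.symm).symm ⟨f, hf⟩, by simp⟩
  · rintro ⟨ξ, rfl⟩
    exact Subtype.coe_prop _

/-- The right shift semigroup `A s`, with left inverses `B s` that tend strongly to `0`. -/
theorem exists_shift [TopologicalSpace.SeparableSpace H] (hinf : ¬ FiniteDimensional ℂ H) :
    ∃ A B : ℝ → H →L[ℂ] H, (∀ s, 0 ≤ s → B s * A s = 1) ∧ A 0 = 1 ∧ B 0 = 1 ∧
      (∀ s, ‖A s‖ ≤ 1) ∧ (∀ ξ, Continuous fun s => A s ξ) ∧
      (∀ ξ, Continuous fun s => B s ξ) ∧ ∀ ξ, Tendsto (fun s => B s ξ) atTop (𝓝 0) := by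
  obtain ⟨J, hJ⟩ := exists_isometry hinf
  let J' : L2R →L[ℂ] H := ContinuousLinearMap.adjoint J.toContinuousLinearMap
  have hJ'J : ∀ ξ, J' (J ξ) = ξ := fun ξ => by
    refine ext_inner_left ℂ fun η => ?_
    rw [ContinuousLinearMap.adjoint_inner_right]
    exact J.inner_map_map η ξ
  have hJJ' : ∀ f ∈ K, J (J' f) = f := fun f hf => by
    obtain ⟨ξ, rfl⟩ := (hJ f).1 hf
    rw [hJ'J]
  have hnJ' : ∀ f, ‖J' f‖ ≤ ‖f‖ := fun f => by
    refine (J'.le_opNorm f).trans (mul_le_of_le_one_left (norm_nonneg _) ?_)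
    rw [LinearIsometryEquiv.norm_map]
    exact J.norm_toContinuousLinearMap_le
  let C : ℝ → H →L[ℂ] H := fun s =>
    J' ∘L (T s).toContinuousLinearMap ∘L J.toContinuousLinearMap
  have hC : ∀ s ξ, C s ξ = J' (T s (J ξ)) := fun s ξ => rfl
  have hC0 : C 0 = 1 := by
    ext ξ
    rw [hC, T_zero, hJ'J]
    rfl
  have hCc : ∀ ξ, Continuous fun s => C s ξ := fun ξ =>
    J'.continuous.comp (continuous_T (J ξ))
  refine ⟨C, fun s => C (-s), ?_, hC0, by simpa using hC0, ?_, hCc, ?_, ?_⟩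
  · intro s hs
    ext ξ
    change C (-s) (C s ξ) = ξ
    rw [hC, hC, hJJ' _ (T_mem_K hs ((hJ _).2 ⟨ξ, rfl⟩)), T_T, neg_add_cancel, T_zero, hJ'J]
  · intro s
    refine ContinuousLinearMap.opNorm_le_bound _ zero_le_one fun ξ => ?_
    rw [hC, one_mul]
    refine (hnJ' _).trans ?_
    rw [LinearIsometry.norm_map, LinearIsometry.norm_map]
  · exact fun ξ => (hCc ξ).comp continuous_neg
  · intro ξ
    -- The vectors `f` with `J* T (-s) f → 0` form a closed subspace, which contains `K`.
    let S : Submodule ℂ L2R :=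
      { carrier := {f | Tendsto (fun s => J' (T (-s) f)) atTop (𝓝 0)}
        add_mem' := fun {f g} hf hg => by
          simpa using Tendsto.add hf hg
        zero_mem' := by simp
        smul_mem' := fun c f hf => by
          simpa using Tendsto.const_smul hf c }
    have hS : IsClosed (S : Set L2R) := by
      refine isClosed_of_closure_subset fun f hf => ?_
      change Tendsto (fun s => J' (T (-s) f)) atTop (𝓝 0)
      rw [Metric.tendsto_nhds]
      intro ε hε
      obtain ⟨g, hg, hfg⟩ := Metric.mem_closure_iff.1 hf (ε / 2) (half_pos hε)
      have hg' : Tendsto (fun s => J' (T (-s) g)) atTop (𝓝 0) := hg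
      filter_upwards [Metric.tendsto_nhds.1 hg' (ε / 2) (half_pos hε)] with s hs
      rw [dist_zero_right] at hs ⊢
      have h1 : J' (T (-s) f) = J' (T (-s) (f - g)) + J' (T (-s) g) := by
        rw [map_sub, map_sub, sub_add_cancel]
      have h2 : ‖J' (T (-s) (f - g))‖ ≤ ‖f - g‖ := by
        refine (hnJ' _).trans ?_
        rw [LinearIsometry.norm_map]
      rw [dist_eq_norm] at hfg
      rw [h1]
      linarith [norm_add_le (J' (T (-s) (f - g))) (J' (T (-s) g))]
    have hKS : K ≤ S := by
      refine K_le hS fun r hr => ?_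
      change Tendsto (fun s => J' (T (-s) (T r φ))) atTop (𝓝 0)
      refine tendsto_const_nhds.congr' ?_
      filter_upwards [eventually_ge_atTop (r + 1)] with s hs
      symm
      rw [T_T]
      refine ext_inner_left ℂ fun η => ?_
      rw [ContinuousLinearMap.adjoint_inner_right, inner_zero_right]
      exact inner_K_eq_zero (by linarith) ((hJ _).2 ⟨η, rfl⟩)
    exact hKS ((hJ _).2 ⟨ξ, rfl⟩)

end Shift

/-! ### The contraction -/

section Contraction

variable {H : Type*} [NormedAddCommGroup H] [InnerProductSpace ℂ H]

/-- A bounded strongly continuous family of operators may be evaluated along a continuous family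
of vectors. -/
theorem tendsto_apply {Y : Type*} {l : Filter Y} {G : Y → H →L[ℂ] H} {η : Y → H} {G₀ : H →L[ℂ] H}
    {η₀ : H} {C : ℝ} (hC : ∀ y, ‖G y‖ ≤ C) (hG : Tendsto (fun y => G y η₀) l (𝓝 (G₀ η₀)))
    (hη : Tendsto η l (𝓝 η₀)) : Tendsto (fun y => G y (η y)) l (𝓝 (G₀ η₀)) := by
  have h1 : Tendsto (fun y => G y (η y - η₀)) l (𝓝 0) := by
    refine squeeze_zero_norm (a := fun y => C * ‖η y - η₀‖) (fun y => ?_) ?_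
    · exact (G y).le_of_opNorm_le (hC y) _
    · simpa using (tendsto_iff_norm_sub_tendsto_zero.1 hη).const_mul C
  simpa using h1.add hG

/-- Given `b * a = 1`, the copy of `g` on the range of `a`, extended by the identity on the kernel
of `b`. -/
def compress {R : Type*} [Ring R] (a b g : R) : R := a * g * b + (1 - a * b)

theorem compress_mul {R : Type*} [Ring R] {a b : R} (hab : b * a = 1) (g h : R) :
    compress a b g * compress a b h = compress a b (g * h) := by
  have h1 : ∀ c, b * (a * c) = c := fun c => by rw [← mul_assoc, hab, one_mul]
  simp only [compress, mul_add, add_mul, mul_sub, sub_mul, mul_assoc, h1, one_mul, mul_one]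
  abel

theorem compress_one {R : Type*} [Ring R] (a b : R) : compress a b 1 = 1 := by
  simp [compress]

variable {X : Type*}

open Classical in
/-- The homotopy from `1` at `t = 0` to `g` at `t = 1`, running through the compressions of `g` to
the range of `A s` with `s = 1/t - 1`. -/
noncomputable def contraction (A B : ℝ → H →L[ℂ] H) (g : X → H →L[ℂ] H) (p : X × I) : H →L[ℂ] H :=
  if (p.2 : ℝ) = 0 then 1 else compress (A ((p.2 : ℝ)⁻¹ - 1)) (B ((p.2 : ℝ)⁻¹ - 1)) (g p.1)

variable {A B : ℝ → H →L[ℂ] H}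

theorem contraction_mul (hBA : ∀ s, 0 ≤ s → B s * A s = 1) {g h : X → H →L[ℂ] H}
    (hgh : ∀ x, g x * h x = 1) (p : X × I) : contraction A B g p * contraction A B h p = 1 := by
  unfold contraction
  split_ifs with h0
  · exact one_mul 1
  · have hpos : (0 : ℝ) < p.2 := lt_of_le_of_ne p.2.2.1 (Ne.symm h0)
    have hs : (0 : ℝ) ≤ (p.2 : ℝ)⁻¹ - 1 := sub_nonneg.2 ((one_le_inv₀ hpos).2 p.2.2.2)
    rw [compress_mul (hBA _ hs), hgh, compress_one]

theorem continuous_contraction [CompleteSpace H] [TopologicalSpace X] [CompactSpace X]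
    (hA1 : ∀ s, ‖A s‖ ≤ 1) (hA : ∀ ξ, Continuous fun s => A s ξ)
    (hB : ∀ ξ, Continuous fun s => B s ξ) (hB0 : ∀ ξ, Tendsto (fun s => B s ξ) atTop (𝓝 0))
    {g : X → H →L[ℂ] H} (hg : ∀ ξ, Continuous fun x => g x ξ) (ξ : H) :
    Continuous fun p => contraction A B g p ξ := by
  obtain ⟨C, hC⟩ : ∃ C, ∀ x, ‖g x‖ ≤ C := banach_steinhaus fun η => by
    obtain ⟨C, hC⟩ := (isCompact_range (hg η)).isBounded.exists_norm_le
    exact ⟨C, fun x => hC _ ⟨x, rfl⟩⟩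
  rw [continuous_iff_continuousAt]
  rintro ⟨x, t⟩
  have happ : ∀ q : X × I, (q.2 : ℝ) ≠ 0 → contraction A B g q ξ =
      A ((q.2 : ℝ)⁻¹ - 1) (g q.1 (B ((q.2 : ℝ)⁻¹ - 1) ξ)) +
        (ξ - A ((q.2 : ℝ)⁻¹ - 1) (B ((q.2 : ℝ)⁻¹ - 1) ξ)) := fun q hq => by
    rw [contraction, if_neg hq]
    rfl
  have hcoe : Continuous fun q : X × I => (q.2 : ℝ) := by fun_prop
  by_cases ht : (t : ℝ) = 0
  · have hval : contraction A B g (x, t) ξ = ξ := by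
      rw [contraction, if_pos ht]
      rfl
    rw [ContinuousAt, hval, tendsto_iff_norm_sub_tendsto_zero]
    -- Where `t ≠ 0`, the difference is at most `(C + 1) ‖B s ξ‖` with `s = 1/t - 1`; where `t = 0`,
    -- it vanishes.
    rw [Metric.tendsto_nhds]
    intro ε hε
    have hlim : Tendsto (fun r : ℝ => (C + 1) * ‖B (r⁻¹ - 1) ξ‖) (𝓝[>] 0) (𝓝 0) := by
      have h1 : Tendsto (fun r : ℝ => r⁻¹ - 1) (𝓝[>] 0) atTop := by
        simpa only [sub_eq_add_neg] using
          tendsto_atTop_add_const_right _ (-1 : ℝ) tendsto_inv_nhdsGT_zero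
      simpa using (((hB0 ξ).comp h1).norm).const_mul (C + 1)
    have hev := (Metric.tendsto_nhds.1 hlim ε hε)
    rw [eventually_nhdsWithin_iff] at hev
    have hev' := (hcoe.tendsto (x, t)).eventually (by simpa [ht] using hev)
    filter_upwards [hev'] with q hq
    by_cases hq0 : (q.2 : ℝ) = 0
    · rw [contraction, if_pos hq0]
      simpa using hε
    · have hpos : (0 : ℝ) < q.2 := lt_of_le_of_ne q.2.2.1 (Ne.symm hq0)
      refine lt_of_le_of_lt ?_ (hq hpos)
      rw [happ q hq0, dist_zero_right, norm_norm]
      set s := (q.2 : ℝ)⁻¹ - 1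
      have e1 : ‖A s (g q.1 (B s ξ))‖ ≤ C * ‖B s ξ‖ :=
        ((A s).le_of_opNorm_le (hA1 s) _).trans
          (by rw [one_mul]; exact (g q.1).le_of_opNorm_le (hC _) _)
      have e2 : ‖A s (B s ξ)‖ ≤ ‖B s ξ‖ := by
        simpa using (A s).le_of_opNorm_le (hA1 s) (B s ξ)
      have e3 : A s (g q.1 (B s ξ)) + (ξ - A s (B s ξ)) - ξ =
          A s (g q.1 (B s ξ)) - A s (B s ξ) := by abel
      rw [e3]
      calc _ ≤ (C + 1) * ‖B s ξ‖ := by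
            linarith [norm_sub_le (A s (g q.1 (B s ξ))) (A s (B s ξ))]
        _ ≤ _ := mul_le_mul_of_nonneg_right (le_abs_self _) (norm_nonneg _)
  · have hne : ∀ᶠ q : X × I in 𝓝 (x, t), (q.2 : ℝ) ≠ 0 :=
      (hcoe.tendsto (x, t)).eventually_ne ht
    refine ContinuousAt.congr ?_ (hne.mono fun q hq => (happ q hq).symm)
    have hs : Tendsto (fun q : X × I => (q.2 : ℝ)⁻¹ - 1) (𝓝 (x, t)) (𝓝 ((t : ℝ)⁻¹ - 1)) :=
      ((hcoe.tendsto (x, t)).inv₀ ht).sub_const 1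
    have hBs := ((hB ξ).tendsto _).comp hs
    have hAs : ∀ η, Tendsto (fun q : X × I => A ((q.2 : ℝ)⁻¹ - 1) η) (𝓝 (x, t))
        (𝓝 (A ((t : ℝ)⁻¹ - 1) η)) := fun η => ((hA η).tendsto _).comp hs
    have hgB := tendsto_apply (G := fun q : X × I => g q.1) (G₀ := g x) (fun q => hC q.1)
      (((hg _).tendsto x).comp (continuous_fst.tendsto (x, t))) hBs
    exact (tendsto_apply (fun q => hA1 _) (hAs _) hgB).add
      ((tendsto_apply (fun q => hA1 _) (hAs _) hBs).const_sub ξ)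

end Contraction

end GLContractible

end

/-- The GL part of Proposition A2.1: the general linear group of an infinite-dimensional
separable Hilbert space is contractible in the compact-open topology (equivalently, via the
embedding `g ↦ (g, g⁻¹)`, the strong operator topology on both `g` and `g⁻¹`). -/
theorem stmt_5 {H : Type*} [NormedAddCommGroup H] [InnerProductSpace ℂ H] [CompleteSpace H]
    [TopologicalSpace.SeparableSpace H] (hinf : ¬ FiniteDimensional ℂ H)
    {X : Type*} [TopologicalSpace X] [TopologicalSpace.MetrizableSpace X] [CompactSpace X]
    (f : X → H →L[ℂ] H) (hf : ∀ x, IsUnit (f x))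
    (hfSOT : ∀ ξ : H, Continuous fun x => f x ξ)
    (hfinvSOT : ∀ ξ : H, Continuous fun x => Ring.inverse (f x) ξ) :
    ∃ F : X × I → H →L[ℂ] H,
      (∀ p, IsUnit (F p)) ∧
      (∀ x, F (x, 1) = f x) ∧
      (∀ x, F (x, 0) = 1) ∧
      (∀ ξ : H, Continuous fun p => F p ξ) ∧
      (∀ ξ : H, Continuous fun p => Ring.inverse (F p) ξ) := by
  obtain ⟨A, B, hBA, hA0, hB0, hA1, hA, hB, hlim⟩ := GLContractible.exists_shift hinf
  have h1 : ∀ p, GLContractible.contraction A B f p *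
      GLContractible.contraction A B (fun x => Ring.inverse (f x)) p = 1 :=
    GLContractible.contraction_mul hBA fun x => Ring.mul_inverse_cancel _ (hf x)
  have h2 : ∀ p, GLContractible.contraction A B (fun x => Ring.inverse (f x)) p *
      GLContractible.contraction A B f p = 1 :=
    GLContractible.contraction_mul hBA fun x => Ring.inverse_mul_cancel _ (hf x)
  refine ⟨GLContractible.contraction A B f, fun p => ⟨⟨_, _, h1 p, h2 p⟩, rfl⟩, fun x => ?_,
    fun x => ?_, GLContractible.continuous_contraction hA1 hA hB hlim hfSOT, fun ξ => ?_⟩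
  · simp [GLContractible.contraction, GLContractible.compress, hA0, hB0]
  · simp [GLContractible.contraction]
  · have hinv : ∀ p, Ring.inverse (GLContractible.contraction A B f p) =
        GLContractible.contraction A B (fun x => Ring.inverse (f x)) p := fun p =>
      Ring.inverse_unit ⟨_, _, h1 p, h2 p⟩
    simp only [hinv]
    exact GLContractible.continuous_contraction hA1 hA hB hlim hfinvSOT ξ
end

section
/- Let H be an infinite-dimensional separable complex Hilbert space and X a compact metrizable space. Let f : X → B(H) be a map such that x ↦ f(x)ξ is continuous for every ξ ∈ H and each f(x) is Fredholm, i.e. there exists B ∈ B(H) with f(x)B − 1 and Bf(x) − 1 compact. Then there exists F : X × [0,1] → B(H) such that each F(x,t) is Fredholm in this sense, F(x,1) = f(x), F(x,0) = 1, and for every ξ ∈ H the map (x,t) ↦ F(x,t)ξ is continuous. (The space Fred(H) of Fredholm operators is contractible in the strong operator (compact-open) topology: the Fredholm part of Proposition A2.1.) -/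
/-!
The space `H` is identified with `L²([0, ∞))`, both being separable and infinite-dimensional
(`nonempty_equiv_l2`). The right shifts form a strongly continuous semigroup of isometries there,
starting at the identity, whose adjoints (left shifts with truncation) are strongly continuous and
tend strongly to `0` (`exists_shift_semigroup`). Reparametrising the semigroup by `(0, 1]` gives
isometries `V t` with `V 1 = 1` and `(V t)* → 0` strongly as `t → 0` (`exists_isometry_path`).

The contraction is `F (x, t) = V t f(x) (V t)* + (1 - V t (V t)*)`, with `F (x, 0) = 1`: it acts as
`f x` on the range of `V t` and as the identity on the orthogonal complement. It is Fredholm because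
`A ↦ V A V* + (1 - V V*)` is multiplicative and maps perturbations by compact operators to such
(`fredholm_conj`). Strong continuity follows from the uniform bound on `‖f x‖` given by
Banach–Steinhaus and compactness of `X` (`tendsto_clm_apply`); at `t = 0` the terms
`V t f(x) (V t)* ξ` and `V t (V t)* ξ` tend to `0` because `(V t)* ξ` does.
-/

open unitInterval
open MeasureTheory Filter Topology

theorem nonempty_equiv_l2 {E : Type*} [NormedAddCommGroup E] [InnerProductSpace ℂ E]
    [CompleteSpace E] [TopologicalSpace.SeparableSpace E] (hinf : ¬ FiniteDimensional ℂ E) :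
    Nonempty (E ≃ₗᵢ[ℂ] lp (fun _ : ℕ => ℂ) 2) := by
  obtain ⟨w, b, -⟩ := exists_hilbertBasis ℂ E
  -- Orthonormal vectors are at distance `√2`, so the balls of radius `1 / 2` are disjoint.
  have hdist : ∀ i j, i ≠ j → 1 ≤ dist (b i) (b j) := by
    intro i j hij
    have h1 := b.orthonormal.1 i
    have h2 := b.orthonormal.1 j
    have h3 := b.orthonormal.2 hij
    have h4 := norm_sub_sq (𝕜 := ℂ) (b i) (b j)
    rw [h1, h2, h3] at h4
    simp at h4
    rw [dist_eq_norm]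
    nlinarith [norm_nonneg (b i - b j)]
  have hcount : Countable w := by
    refine Pairwise.countable_of_isOpen_disjoint (s := fun i => Metric.ball (b i) (1 / 2))
      (fun i j hij => Metric.ball_disjoint_ball (by linarith [hdist i j hij]))
      (fun _ => Metric.isOpen_ball) (fun i => ⟨b i, Metric.mem_ball_self (by norm_num)⟩)
  have hinfw : Infinite w := by
    by_contra hw
    rw [not_infinite_iff_finite] at hw
    have := Fintype.ofFinite w
    exact hinf b.toOrthonormalBasis.toBasis.finiteDimensional_of_finite
  obtain ⟨e⟩ := nonempty_equiv_of_countable (α := ℕ) (β := w)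
  exact ⟨(HilbertBasis.mk (b.orthonormal.comp e e.injective) (by
    rw [Set.range_comp, e.range_eq_univ, Set.image_univ, b.dense_span])).repr⟩

/-- Translation by `s` on `L²(ℝ)`: `(shiftL2 s g) x = g (x - s)`. -/
noncomputable def shiftL2 (s : ℝ) :
    Lp ℂ 2 (volume : Measure ℝ) →ₗᵢ[ℂ] Lp ℂ 2 (volume : Measure ℝ) :=
  Lp.compMeasurePreservingₗᵢ ℂ (fun x => x - s) (measurePreserving_sub_right volume s)

theorem shiftL2_ae (s : ℝ) (g : Lp ℂ 2 (volume : Measure ℝ)) :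
    shiftL2 s g =ᵐ[volume] fun x => g (x - s) :=
  Lp.coeFn_compMeasurePreserving g (measurePreserving_sub_right volume s)

theorem shiftL2_zero (g : Lp ℂ 2 (volume : Measure ℝ)) : shiftL2 0 g = g := by
  apply Lp.ext
  filter_upwards [shiftL2_ae 0 g] with x hx
  simp [hx]

theorem shiftL2_shiftL2_neg (s : ℝ) (g : Lp ℂ 2 (volume : Measure ℝ)) :
    shiftL2 s (shiftL2 (-s) g) = g := by
  apply Lp.ext
  filter_upwards [shiftL2_ae s (shiftL2 (-s) g),
    (measurePreserving_sub_right volume s).quasiMeasurePreserving.ae (shiftL2_ae (-s) g)]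
    with x hx hx'
  simp [hx, hx']

theorem inner_shiftL2 (s : ℝ) (g h : Lp ℂ 2 (volume : Measure ℝ)) :
    inner ℂ (shiftL2 s g) h = inner ℂ g (shiftL2 (-s) h) := by
  rw [← (shiftL2 s).inner_map_map g, shiftL2_shiftL2_neg]

theorem continuous_shiftL2 (g : Lp ℂ 2 (volume : Measure ℝ)) :
    Continuous fun s => shiftL2 s g := by
  let G : C(ℝ, C(ℝ, ℝ)) := (ContinuousMap.mk (fun a : ℝ × ℝ => a.2 - a.1) (by fun_prop)).curry
  exact (continuous_const (y := g)).compMeasurePreservingLp G.continuous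
    (fun s => measurePreserving_sub_right volume s) (by norm_num)

/-- The closed subspace `L²([0, ∞))` of `L²(ℝ)`: functions whose restriction to `(-∞, 0)` vanishes
almost everywhere. -/
noncomputable def halfLine : Submodule ℂ (Lp ℂ 2 (volume : Measure ℝ)) :=
  (LpToLpRestrictCLM ℝ ℂ ℂ volume 2 (Set.Iio 0)).ker

theorem mem_halfLine {g : Lp ℂ 2 (volume : Measure ℝ)} :
    g ∈ halfLine ↔ ∀ᵐ x : ℝ, x < 0 → g x = 0 := by
  have h := LpToLpRestrictCLM_coeFn ℂ (Set.Iio (0 : ℝ)) g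
  rw [halfLine, LinearMap.mem_ker, ContinuousLinearMap.coe_coe, Lp.eq_zero_iff_ae_eq_zero]
  rw [show (∀ᵐ x : ℝ, x < 0 → g x = 0) ↔ ∀ᵐ x ∂(volume.restrict (Set.Iio (0 : ℝ))), g x = 0 from
    (ae_restrict_iff' measurableSet_Iio).symm]
  constructor
  · intro h'
    filter_upwards [h, h'] with x hx hx'
    rw [← hx, hx']; rfl
  · intro h'
    filter_upwards [h, h'] with x hx hx'
    rw [hx, hx']; rfl

theorem shiftL2_eq_zero {g : Lp ℂ 2 (volume : Measure ℝ)} (hg : g ∈ halfLine) (s : ℝ) :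
    ∀ᵐ x : ℝ, x < s → shiftL2 s g x = 0 := by
  filter_upwards [shiftL2_ae s g,
    (measurePreserving_sub_right volume s).quasiMeasurePreserving.ae (mem_halfLine.1 hg)]
    with x hx hx' hxs
  rw [hx, hx' (by linarith)]

theorem shiftL2_mem {g : Lp ℂ 2 (volume : Measure ℝ)} (hg : g ∈ halfLine) {s : ℝ} (hs : 0 ≤ s) :
    shiftL2 s g ∈ halfLine := by
  rw [mem_halfLine]
  filter_upwards [shiftL2_eq_zero hg s] with x hx h0
  exact hx (by linarith)

instance : CompleteSpace halfLine :=
  (LpToLpRestrictCLM ℝ ℂ ℂ volume 2 (Set.Iio 0)).isClosed_ker.completeSpace_coe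

theorem not_finiteDimensional_halfLine : ¬ FiniteDimensional ℂ halfLine := by
  intro hfin
  have hvol : ∀ n : ℕ, volume (Set.Ico (n : ℝ) (n + 1)) ≠ ⊤ := by simp
  let e : ℕ → Lp ℂ 2 (volume : Measure ℝ) := fun n =>
    indicatorConstLp 2 measurableSet_Ico (hvol n) (1 : ℂ)
  have he : ∀ n, e n ∈ halfLine := by
    intro n
    rw [mem_halfLine]
    filter_upwards [indicatorConstLp_coeFn (p := 2) (hs := measurableSet_Ico) (hμs := hvol n)
      (c := (1 : ℂ))] with x hx h0
    rw [hx, Set.indicator_of_notMem]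
    intro hx'
    have : (0 : ℝ) ≤ n := n.cast_nonneg
    linarith [hx'.1]
  have horth : Orthonormal ℂ fun n => (⟨e n, he n⟩ : halfLine) := by
    rw [orthonormal_iff_ite]
    intro i j
    rw [Submodule.coe_inner]
    simp only [e]
    rw [L2.inner_indicatorConstLp_indicatorConstLp (hμs := hvol i) (hμt := hvol j)]
    split_ifs with hij
    · subst hij
      simp
    · have : Set.Ico (i : ℝ) (i + 1) ∩ Set.Ico (j : ℝ) (j + 1) = ∅ := by
        ext x
        simp only [Set.mem_inter_iff, Set.mem_Ico, Set.mem_empty_iff_false, iff_false]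
        rintro ⟨⟨h1, h2⟩, h3, h4⟩
        apply hij
        have h5 : (i : ℝ) < j + 1 := by linarith
        have h6 : (j : ℝ) < i + 1 := by linarith
        norm_cast at h5 h6
        omega
      simp [this]
  exact Module.Finite.not_linearIndependent_of_infinite (R := ℂ) _ horth.linearIndependent

theorem tail_tendsto (g : Lp ℂ 2 (volume : Measure ℝ)) :
    Tendsto (fun s : ℝ => ∫ x in Set.Ici s, ‖g x‖ ^ 2) atTop (𝓝 0) := by
  have h := tendsto_setIntegral_of_antitone (μ := volume) (f := fun x : ℝ => ‖g x‖ ^ 2)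
    (s := fun s : ℝ => Set.Ici s) (fun _ => measurableSet_Ici)
    (fun a b hab => Set.Ici_subset_Ici.2 hab)
    ⟨0, ((memLp_two_iff_integrable_sq_norm (Lp.aestronglyMeasurable g)).1
      (Lp.memLp g)).integrableOn⟩
  have he : (⋂ s : ℝ, Set.Ici s) = ∅ := by
    ext x
    simp only [Set.mem_iInter, Set.mem_Ici, Set.mem_empty_iff_false, iff_false, not_forall, not_le]
    exact exists_gt x
  simpa [he] using h

/-- Cauchy–Schwarz on `[s, ∞)`, for `u` supported there. -/
theorem norm_inner_le_tail {u g : Lp ℂ 2 (volume : Measure ℝ)} {s : ℝ}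
    (hu : ∀ᵐ x : ℝ, x < s → u x = 0) :
    ‖inner ℂ u g‖ ≤ ‖u‖ * √(∫ x in Set.Ici s, ‖g x‖ ^ 2) := by
  have hm : MemLp ((Set.Ici s).indicator g) 2 volume := (Lp.memLp g).indicator measurableSet_Ici
  have h1 : inner ℂ u g = inner ℂ u (hm.toLp _) := by
    rw [L2.inner_def, L2.inner_def]
    apply integral_congr_ae
    filter_upwards [hu, hm.coeFn_toLp] with x hx hx'
    rw [hx']
    by_cases hxs : x < s
    · simp [hx hxs]
    · rw [Set.indicator_of_mem (by simpa using hxs)]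
  have h2 : ‖hm.toLp _‖ ^ 2 = ∫ x in Set.Ici s, ‖g x‖ ^ 2 := by
    have h3 : (inner ℂ (hm.toLp _) (hm.toLp _) : ℂ) = ((∫ x in Set.Ici s, ‖g x‖ ^ 2 : ℝ) : ℂ) := by
      rw [L2.inner_def, ← integral_indicator measurableSet_Ici, ← integral_complex_ofReal]
      apply integral_congr_ae
      filter_upwards [hm.coeFn_toLp] with x hx'
      rw [hx', inner_self_eq_norm_sq_to_K]
      by_cases hxs : x ∈ Set.Ici s
      · simp [Set.indicator_of_mem hxs]
      · simp [Set.indicator_of_notMem hxs]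
    rw [inner_self_eq_norm_sq_to_K] at h3
    exact Complex.ofReal_injective (by rw [← h3]; simp)
  rw [h1, ← h2, Real.sqrt_sq (norm_nonneg _)]
  exact norm_inner_le_norm _ _

/-- The right shift semigroup on `L²([0, ∞))` and its adjoint, transported to `H`. Only the values
at `s ≥ 0` matter; for `s < 0` the roles of `V` and `V'` are exchanged. -/
theorem exists_shift_semigroup {H : Type*} [NormedAddCommGroup H] [InnerProductSpace ℂ H]
    [CompleteSpace H] [TopologicalSpace.SeparableSpace H] (hinf : ¬ FiniteDimensional ℂ H) :
    ∃ V V' : ℝ → H →L[ℂ] H, V 0 = 1 ∧ V' 0 = 1 ∧ (∀ s, 0 ≤ s → V' s * V s = 1) ∧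
      (∀ s, ‖V s‖ ≤ 1) ∧ (∀ s, ‖V' s‖ ≤ 1) ∧ (∀ ξ, Continuous fun s => V s ξ) ∧
      (∀ ξ, Continuous fun s => V' s ξ) ∧ ∀ ξ, Tendsto (fun s => V' s ξ) atTop (𝓝 0) := by
  obtain ⟨e₁⟩ := nonempty_equiv_l2 hinf
  have : Fact ((2 : ENNReal) ≠ ⊤) := ⟨by norm_num⟩
  obtain ⟨e₂⟩ := nonempty_equiv_l2 not_finiteDimensional_halfLine
  let e : H ≃ₗᵢ[ℂ] halfLine := e₁.trans e₂.symm
  obtain ⟨W, hWmem, hWsurj⟩ : ∃ W : H →ₗᵢ[ℂ] Lp ℂ 2 (volume : Measure ℝ),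
      (∀ h, W h ∈ halfLine) ∧ ∀ g ∈ halfLine, ∃ h, W h = g :=
    ⟨halfLine.subtypeₗᵢ.comp e.toLinearIsometry, fun h => (e h).2,
      fun g hg => ⟨e.symm ⟨g, hg⟩, by simp⟩⟩
  obtain ⟨A, hAinner, hA⟩ : ∃ A : Lp ℂ 2 (volume : Measure ℝ) →L[ℂ] H,
      (∀ u g, inner ℂ u (A g) = inner ℂ (W u) g) ∧ ‖A‖ ≤ 1 :=
    ⟨W.toContinuousLinearMap.adjoint,
      fun u g => ContinuousLinearMap.adjoint_inner_right W.toContinuousLinearMap u g, by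
        rw [LinearIsometryEquiv.norm_map]
        exact W.norm_toContinuousLinearMap_le⟩
  have hAW : ∀ h, A (W h) = h := fun h =>
    ext_inner_left ℂ fun v => by rw [hAinner, W.inner_map_map]
  let U : ℝ → H →L[ℂ] H := fun s =>
    A ∘L (shiftL2 s).toContinuousLinearMap ∘L W.toContinuousLinearMap
  have hU : ∀ s h, U s h = A (shiftL2 s (W h)) := fun s h => rfl
  have hUn : ∀ s, ‖U s‖ ≤ 1 := by
    intro s
    refine ContinuousLinearMap.opNorm_le_bound _ zero_le_one fun h => ?_
    rw [hU]
    refine (A.le_of_opNorm_le hA _).trans ?_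
    rw [(shiftL2 s).norm_map, W.norm_map]
  have hUc : ∀ ξ, Continuous fun s => U s ξ := fun ξ =>
    A.continuous.comp (continuous_shiftL2 (W ξ))
  have hU0 : U 0 = 1 := by
    ext h
    rw [hU, shiftL2_zero, hAW]; rfl
  refine ⟨U, fun s => U (-s), hU0, by simpa using hU0, ?_, hUn, fun s => hUn _, hUc,
    fun ξ => (hUc ξ).comp continuous_neg, ?_⟩
  · intro s hs
    ext h
    obtain ⟨k, hk⟩ := hWsurj _ (shiftL2_mem (hWmem h) hs)
    have := shiftL2_shiftL2_neg (-s) (W h)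
    rw [neg_neg] at this
    rw [mul_apply_eq_comp, hU s, ← hk, hAW, hU, hk, this, hAW]; rfl
  · intro ξ
    -- Moving the shift to the other side tests `W ξ` only against functions supported in `[s, ∞)`.
    have hle : ∀ s, ‖U (-s) ξ‖ ≤ √(∫ x in Set.Ici s, ‖W ξ x‖ ^ 2) := by
      intro s
      set u := U (-s) ξ with hu
      have h1 : inner ℂ u u = inner ℂ (shiftL2 s (W u)) (W ξ) := by
        rw [inner_shiftL2, ← hAinner, ← hU]
      have h2 := norm_inner_le_tail (g := W ξ) (shiftL2_eq_zero (hWmem u) s)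
      rw [← h1, (shiftL2 s).norm_map, W.norm_map, inner_self_eq_norm_sq_to_K, norm_pow,
        RCLike.norm_ofReal, abs_norm, sq] at h2
      rcases (norm_nonneg u).eq_or_lt with h0 | h0
      · rw [← h0]; positivity
      · exact le_of_mul_le_mul_left h2 h0
    refine squeeze_zero_norm hle ?_
    simpa using (tail_tendsto (W ξ)).sqrt

/-- The shift semigroup, reparametrised by `t = 1 / (1 + s) ∈ (0, 1]` and extended by `0` to `t = 0`.
The adjoints `V'` are strongly continuous up to `t = 0`; the isometries `V` are not. -/
theorem exists_isometry_path {H : Type*} [NormedAddCommGroup H] [InnerProductSpace ℂ H]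
    [CompleteSpace H] [TopologicalSpace.SeparableSpace H] (hinf : ¬ FiniteDimensional ℂ H) :
    ∃ V V' : I → H →L[ℂ] H, V 1 = 1 ∧ V' 1 = 1 ∧ V 0 = 0 ∧ (∀ t, t ≠ 0 → V' t * V t = 1) ∧
      (∀ t, ‖V t‖ ≤ 1) ∧ (∀ ξ t, t ≠ 0 → ContinuousAt (fun t => V t ξ) t) ∧ V' 0 = 0 ∧
      (∀ ξ, Continuous fun t => V' t ξ) := by
  obtain ⟨V, V', h0, h0', hVV, hn, hn', hc, hc', hlim⟩ := exists_shift_semigroup hinf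
  let τ : I → ℝ := fun t => (t : ℝ)⁻¹ - 1
  have hτ : ∀ t, t ≠ 0 → ContinuousAt τ t := by
    intro t ht
    have ht' : (t : ℝ) ≠ 0 := by simpa using ht
    exact (continuous_subtype_val.continuousAt.inv₀ ht').sub continuousAt_const
  have key : ∀ (U : ℝ → H →L[ℂ] H), (∀ ξ, Continuous fun s => U s ξ) → ∀ ξ (t : I), t ≠ 0 →
      ContinuousAt (fun t => (if t = 0 then 0 else U (τ t) : H →L[ℂ] H) ξ) t := by
    intro U hU ξ t ht
    refine ContinuousAt.congr ((hU ξ).continuousAt.comp (hτ t ht)) ?_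
    filter_upwards [isOpen_ne.mem_nhds ht] with r hr
    rw [if_neg hr]; rfl
  refine ⟨fun t => if t = 0 then 0 else V (τ t), fun t => if t = 0 then 0 else V' (τ t),
    by simp [τ, h0], by simp [τ, h0'], by simp, ?_, ?_, key V hc, by simp, ?_⟩
  · intro t ht
    simp only [if_neg ht]
    refine hVV _ ?_
    have : 0 < (t : ℝ) := lt_of_le_of_ne t.2.1 (by simpa [eq_comm] using ht)
    have := (one_le_inv₀ this).2 t.2.2
    simp only [τ]; linarith
  · intro t
    dsimp only
    split_ifs
    · simp
    · exact hn _
  · intro ξ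
    rw [continuous_iff_continuousAt]
    intro t
    by_cases ht : t = 0
    · subst ht
      rw [← continuousWithinAt_compl_self, ContinuousWithinAt]
      dsimp only
      rw [if_pos rfl, zero_apply]
      have hpos : Tendsto (fun t : I => (t : ℝ)) (𝓝[{0}ᶜ] 0) (𝓝[>] 0) := by
        refine tendsto_nhdsWithin_iff.2
          ⟨(continuous_subtype_val.tendsto (0 : I)).mono_left nhdsWithin_le_nhds, ?_⟩
        filter_upwards [self_mem_nhdsWithin] with t ht
        exact unitInterval.pos_iff_ne_zero.2 ht
      have hτ0 : Tendsto τ (𝓝[{0}ᶜ] 0) atTop :=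
        tendsto_atTop_add_const_right _ (-1) (tendsto_inv_nhdsGT_zero.comp hpos)
      refine ((hlim ξ).comp hτ0).congr' ?_
      filter_upwards [self_mem_nhdsWithin] with t ht
      rw [if_neg (show t ≠ 0 from ht)]; rfl
    · exact key V' hc' ξ t ht

/-- Composition of operators is jointly strongly continuous on norm-bounded families. -/
theorem tendsto_clm_apply {Y H : Type*} [NormedAddCommGroup H] [NormedSpace ℂ H] {l : Filter Y}
    {A : Y → H →L[ℂ] H} {C : ℝ} (hA : ∀ y, ‖A y‖ ≤ C) {v : Y → H} {v₀ w : H}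
    (hv : Tendsto v l (𝓝 v₀)) (hAv : Tendsto (fun y => A y v₀) l (𝓝 w)) :
    Tendsto (fun y => A y (v y)) l (𝓝 w) := by
  have h1 : Tendsto (fun y => A y (v y - v₀)) l (𝓝 0) := by
    refine squeeze_zero_norm (fun y => (A y).le_of_opNorm_le (hA y) _) ?_
    have := ((hv.sub_const v₀).norm).const_mul C
    simpa using this
  simpa using h1.add hAv

/-- If `V'` is a left inverse of `V`, then `A ↦ V A V' + (1 - V V')` is a unital
multiplicative map, so it preserves inverses modulo compact operators. -/
theorem fredholm_conj {H : Type*} [NormedAddCommGroup H] [NormedSpace ℂ H] {V V' A B : H →L[ℂ] H}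
    (h : V' * V = 1) (hAB : IsCompactOperator (⇑(A * B - 1))) :
    IsCompactOperator
      (⇑((V * A * V' + (1 - V * V')) * (V * B * V' + (1 - V * V')) - 1)) := by
  have : (V * A * V' + (1 - V * V')) * (V * B * V' + (1 - V * V')) - 1
      = V * ((A * B - 1) * V') := by
    have h1 : ∀ Z, V' * (V * Z) = Z := fun Z => by rw [← mul_assoc, h, one_mul]
    simp only [mul_add, add_mul, sub_mul, mul_sub, mul_assoc, h1, mul_one, one_mul]
    abel
  rw [this]
  exact (hAB.comp_clm V').clm_comp V

/-- The Fredholm part of Proposition A2.1: the space `Fred(H)` of Fredholm operators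
(operators invertible modulo compact operators) on an infinite-dimensional separable
Hilbert space is contractible in the strong operator (compact-open) topology. -/
theorem stmt_6 {H : Type*} [NormedAddCommGroup H] [InnerProductSpace ℂ H] [CompleteSpace H]
    [TopologicalSpace.SeparableSpace H] (hinf : ¬ FiniteDimensional ℂ H)
    {X : Type*} [TopologicalSpace X] [TopologicalSpace.MetrizableSpace X] [CompactSpace X]
    (f : X → H →L[ℂ] H)
    (hfSOT : ∀ ξ : H, Continuous fun x => f x ξ)
    (hfFred : ∀ x, ∃ B : H →L[ℂ] H,
      IsCompactOperator (⇑(f x * B - 1)) ∧ IsCompactOperator (⇑(B * f x - 1))) :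
    ∃ F : X × I → H →L[ℂ] H,
      (∀ p, ∃ B : H →L[ℂ] H,
        IsCompactOperator (⇑(F p * B - 1)) ∧ IsCompactOperator (⇑(B * F p - 1))) ∧
      (∀ x, F (x, 1) = f x) ∧
      (∀ x, F (x, 0) = 1) ∧
      (∀ ξ : H, Continuous fun p => F p ξ) := by
  obtain ⟨V, V', h1, h1', h0, hVV, hn, hc, h0', hc'⟩ := exists_isometry_path hinf
  obtain ⟨C, hC⟩ : ∃ C, ∀ x, ‖f x‖ ≤ C := banach_steinhaus fun ξ => by
    obtain ⟨C, hC⟩ := (isCompact_range (hfSOT ξ)).isBounded.exists_norm_le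
    exact ⟨C, fun x => hC _ ⟨x, rfl⟩⟩
  -- `V t` is strongly continuous only for `t ≠ 0`; at `t = 0` it may be applied to null families.
  have hV : ∀ (p : X × I) (v : X × I → H), ContinuousAt v p → (p.2 = 0 → v p = 0) →
      ContinuousAt (fun q => V q.2 (v q)) p := by
    intro p v hv hp0
    refine tendsto_clm_apply (fun q : X × I => hn q.2) hv ?_
    by_cases hp : p.2 = 0
    · simp [hp0 hp]
    · exact ContinuousAt.comp (f := Prod.snd) (hc (v p) p.2 hp) continuousAt_snd
  refine ⟨fun p => V p.2 * f p.1 * V' p.2 + (1 - V p.2 * V' p.2), ?_, ?_, ?_, ?_⟩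
  · rintro ⟨x, t⟩
    by_cases ht : t = 0
    · subst ht
      exact ⟨1, by simpa [h0] using isCompactOperator_zero,
        by simpa [h0] using isCompactOperator_zero⟩
    · obtain ⟨B, hB, hB'⟩ := hfFred x
      exact ⟨V t * B * V' t + (1 - V t * V' t), fredholm_conj (hVV t ht) hB,
        fredholm_conj (hVV t ht) hB'⟩
  · intro x
    simp [h1, h1']
  · intro x
    simp [h0]
  · intro ξ
    rw [continuous_iff_continuousAt]
    intro p
    have hv : ContinuousAt (fun q : X × I => V' q.2 ξ) p :=
      ((hc' ξ).comp continuous_snd).continuousAt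
    have hfv : ContinuousAt (fun q : X × I => f q.1 (V' q.2 ξ)) p :=
      tendsto_clm_apply (fun q : X × I => hC q.1) hv
        ((hfSOT (V' p.2 ξ)).comp continuous_fst).continuousAt
    exact (hV p _ hfv (fun h => by simp [h, h0'])).add
      (continuousAt_const.sub (hV p _ hv (fun h => by simp [h, h0'])))
end

section
/- Let H be a complex Hilbert space, X a metrizable topological space, and A, B : X → B(H) maps such that: x ↦ A_x ξ and x ↦ B_x ξ are continuous for every ξ ∈ H; for every x the operators A_x B_x − 1 and B_x A_x − 1 are compact; and the maps x ↦ A_x B_x − 1 and x ↦ B_x A_x − 1 are continuous for the operator norm. Fix x₀ ∈ X. If A_{x₀} is surjective, then there is a neighbourhood of x₀ on which A_x is surjective; and if A_{x₀} is injective, then there is a neighbourhood of x₀ on which A_x is injective. (Lemma A2.3.) -/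
/-!
Surjectivity. Write `A x₀ * B x₀ = 1 + K` with `K` compact. There is a finite-dimensional
subspace `V` such that, `P` being the orthogonal projection onto `V`, `‖(1 - P) K‖ < 1`; hence
`1 + (1 - P) K` is invertible. Since `A x₀` is surjective there is a linear `R : V → H` with
`A x₀ ∘ R` the inclusion of `V`, and then `1 + (1 - P) K = A x₀ ∘ (B x₀ - R P K)`. The family
`A x ∘ (B x - R P K)` is norm-continuous in `x`, because strong continuity of `A` is norm
continuity on the finite-dimensional space `V`. Invertible operators form an open set, so
`A x` has a right inverse for `x` near `x₀`.

Injectivity. Otherwise there are `xₙ → x₀` and unit vectors `ξₙ` in the kernel of `A xₙ`. With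
`K x = B x * A x - 1` one gets `ξₙ = - K xₙ ξₙ`, which is asymptotic to `- K x₀ ξₙ`; by compactness
a subsequence of `ξₙ` converges to a unit vector `ξ`. The operators `A xₙ` are uniformly bounded
by Banach–Steinhaus, so `A x₀ ξ = lim A xₙ ξₙ = 0`, a contradiction.
-/

open Filter

/-- A compact operator is within norm distance `< 1` of its composition with the orthogonal
projection onto some finite-dimensional subspace: the span of a finite `1/2`-net of the image of
the unit ball. -/
lemma exists_finiteDimensional_norm_sub_proj_lt_one {H : Type*} [NormedAddCommGroup H]
    [InnerProductSpace ℂ H] (K : H →L[ℂ] H) (hK : IsCompactOperator (⇑K)) :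
    ∃ (V : Submodule ℂ H) (_ : FiniteDimensional ℂ V),
      ‖K - V.subtypeL ∘L (V.orthogonalProjectionOnto ∘L K)‖ < 1 := by
  have hc : IsCompact (closure (K '' Metric.closedBall 0 1)) :=
    hK.isCompact_closure_image_closedBall 1
  obtain ⟨t, -, htf, hcov⟩ := hc.finite_cover_balls (e := 1 / 2) (by norm_num)
  have : FiniteDimensional ℂ (Submodule.span ℂ t) := FiniteDimensional.span_of_finite ℂ htf
  refine ⟨Submodule.span ℂ t, this, ?_⟩
  refine lt_of_le_of_lt (ContinuousLinearMap.opNorm_le_of_unit_norm (C := 1 / 2)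
    (by norm_num) ?_) (by norm_num)
  intro v hv
  have hKv : K v ∈ closure (K '' Metric.closedBall 0 1) :=
    subset_closure ⟨v, by simp [hv], rfl⟩
  obtain ⟨y, hy, hyv⟩ := Set.mem_iUnion₂.1 (hcov hKv)
  rw [Metric.mem_ball, dist_eq_norm] at hyv
  -- the projection minimises the distance from `K v` to the span, and `y` is in the span
  have hmin : ‖K v - (Submodule.span ℂ t).starProjection (K v)‖ ≤ ‖K v - y‖ := by
    rw [Submodule.starProjection_minimal]
    exact ciInf_le ⟨0, by rintro _ ⟨w, rfl⟩; positivity⟩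
      (⟨y, Submodule.subset_span hy⟩ : Submodule.span ℂ t)
  exact hmin.trans hyv.le

lemma eventually_surjective_of_surjective {H : Type*} [NormedAddCommGroup H]
    [InnerProductSpace ℂ H] [CompleteSpace H] {X : Type*} [TopologicalSpace X]
    (A B : X → H →L[ℂ] H)
    (hA : ∀ ξ : H, Continuous fun x => A x ξ)
    (x₀ : X) (hcpt : IsCompactOperator (⇑(A x₀ * B x₀ - 1)))
    (hnorm : Continuous fun x => A x * B x - 1)
    (hs : Function.Surjective (A x₀)) : ∀ᶠ x in nhds x₀, Function.Surjective (A x) := by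
  obtain ⟨V, hV, hlt⟩ := exists_finiteDimensional_norm_sub_proj_lt_one _ hcpt
  set K := A x₀ * B x₀ - 1 with hK
  obtain ⟨g, hg⟩ := (A x₀ : H →ₗ[ℂ] H).exists_rightInverse_of_surjective
    (LinearMap.range_eq_top.2 hs)
  let R : V →L[ℂ] H := LinearMap.toContinuousLinearMap (g ∘ₗ V.subtype)
  have hR : A x₀ ∘L R = V.subtypeL := by
    ext v
    exact LinearMap.congr_fun hg (v : H)
  let Q : H →L[ℂ] V := V.orthogonalProjectionOnto ∘L K
  have hG : Continuous fun x => A x ∘L R := continuous_clm_apply.2 fun v => hA (R v)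
  have hT : Continuous fun x => A x * (B x - R ∘L Q) := by
    have h : Continuous fun x => (A x * B x - 1) + 1 - (A x ∘L R) ∘L Q :=
      (hnorm.add continuous_const).sub (hG.clm_comp continuous_const)
    refine h.congr fun x => ?_
    ext v
    simp
  have hunit : IsUnit (A x₀ * (B x₀ - R ∘L Q)) := by
    have heq : A x₀ * (B x₀ - R ∘L Q) = 1 - -(K - V.subtypeL ∘L Q) := by
      rw [← hR, hK]
      ext v
      simp
      abel
    rw [heq]
    exact isUnit_one_sub_of_norm_lt_one (by rwa [norm_neg])
  filter_upwards [hT.continuousAt.eventually (Units.isOpen.mem_nhds hunit)] with x hx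
  obtain ⟨C, hC⟩ := hx.exists_right_inv
  intro y
  exact ⟨(B x - R ∘L Q) (C y), DFunLike.congr_fun hC y⟩

lemma eventually_injective_of_injective {H : Type*} [NormedAddCommGroup H]
    [InnerProductSpace ℂ H] [CompleteSpace H] {X : Type*} [TopologicalSpace X]
    [FirstCountableTopology X] (A B : X → H →L[ℂ] H)
    (hA : ∀ ξ : H, Continuous fun x => A x ξ)
    (x₀ : X) (hcpt : IsCompactOperator (⇑(B x₀ * A x₀ - 1)))
    (hnorm : Continuous fun x => B x * A x - 1)
    (hi : Function.Injective (A x₀)) : ∀ᶠ x in nhds x₀, Function.Injective (A x) := by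
  by_contra hcon
  obtain ⟨u, hu, hnot⟩ := exists_seq_forall_of_frequently (not_eventually.1 hcon)
  have hker : ∀ n, ∃ ξ : H, ‖ξ‖ = 1 ∧ A (u n) ξ = 0 := by
    intro n
    have h := hnot n
    rw [injective_iff_map_eq_zero] at h
    push Not at h
    obtain ⟨a, ha, ha0⟩ := h
    exact ⟨((‖a‖⁻¹ : ℝ) : ℂ) • a, by simp [norm_smul, ha0], by simp [ha]⟩
  choose ξ hξ1 hξ0 using hker
  have hc : IsCompact (closure (⇑(B x₀ * A x₀ - 1) '' Metric.closedBall (0 : H) 1)) :=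
    hcpt.isCompact_closure_image_closedBall 1
  obtain ⟨η, -, φ, hφ, hlim⟩ := hc.tendsto_subseq
    (x := fun n => (B x₀ * A x₀ - 1 : H →L[ℂ] H) (ξ n))
    fun n => subset_closure ⟨ξ n, by simp [hξ1], rfl⟩
  have huφ : Tendsto (fun n => u (φ n)) atTop (nhds x₀) := hu.comp hφ.tendsto_atTop
  -- `ξ = (K x₀ - K xₙ) ξ - K x₀ ξ` on the kernel of `A xₙ`
  have hdiff : Tendsto (fun n => ((B x₀ * A x₀ - 1) -
      (B (u (φ n)) * A (u (φ n)) - 1)) (ξ (φ n))) atTop (nhds 0) := by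
    have h1 : Tendsto (fun n => ‖(B x₀ * A x₀ - 1) - (B (u (φ n)) * A (u (φ n)) - 1)‖)
        atTop (nhds 0) := by
      have := (tendsto_const_nhds (x := B x₀ * A x₀ - 1)).sub
        ((hnorm.tendsto x₀).comp huφ)
      simpa using this.norm
    refine squeeze_zero_norm (fun n => ?_) h1
    simpa only [hξ1, mul_one] using
      ((B x₀ * A x₀ - 1) - (B (u (φ n)) * A (u (φ n)) - 1)).le_opNorm (ξ (φ n))
  have hξlim : Tendsto (fun n => ξ (φ n)) atTop (nhds (-η)) := by
    have h := hdiff.sub hlim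
    rw [zero_sub] at h
    refine h.congr fun n => ?_
    simp [hξ0]
  have hη : ‖-η‖ = 1 :=
    tendsto_nhds_unique hξlim.norm (by simp [hξ1])
  obtain ⟨C, hC⟩ := banach_steinhaus (g := fun n => A (u (φ n))) fun v => by
    obtain ⟨C, hC⟩ := (((hA v).tendsto x₀).comp huφ).norm.bddAbove_range
    exact ⟨C, fun n => hC ⟨n, rfl⟩⟩
  have hAη : Tendsto (fun n => A (u (φ n)) (-η)) atTop (nhds 0) := by
    have h2 : Tendsto (fun n => C * ‖-η - ξ (φ n)‖) atTop (nhds 0) := by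
      have := ((tendsto_const_nhds (x := -η)).sub hξlim).norm.const_mul C
      simpa using this
    refine squeeze_zero_norm (fun n => ?_) h2
    have h3 := (A (u (φ n))).le_of_opNorm_le (hC n) (-η - ξ (φ n))
    rwa [map_sub, hξ0, sub_zero] at h3
  have h0 : A x₀ (-η) = 0 := tendsto_nhds_unique (((hA (-η)).tendsto x₀).comp huφ) hAη
  have : -η = 0 := hi (by rw [h0, map_zero])
  rw [this, norm_zero] at hη
  exact zero_ne_one hη

/-- Lemma A2.3: for a continuous family `(A, B)` in `Fred′(H)` (SOT-continuous families of
operators with `A_x B_x − 1` and `B_x A_x − 1` compact and norm-continuous in `x`), if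
`A_{x₀}` is surjective (resp. injective) then so is `A_x` for all `x` in a neighbourhood
of `x₀`. -/
theorem stmt_7 {H : Type*} [NormedAddCommGroup H] [InnerProductSpace ℂ H] [CompleteSpace H]
    {X : Type*} [TopologicalSpace X] [TopologicalSpace.MetrizableSpace X]
    (A B : X → H →L[ℂ] H)
    (hASOT : ∀ ξ : H, Continuous fun x => A x ξ)
    (hBSOT : ∀ ξ : H, Continuous fun x => B x ξ)
    (hABcpt : ∀ x, IsCompactOperator (⇑(A x * B x - 1)))
    (hBAcpt : ∀ x, IsCompactOperator (⇑(B x * A x - 1)))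
    (hABnorm : Continuous fun x => A x * B x - 1)
    (hBAnorm : Continuous fun x => B x * A x - 1)
    (x₀ : X) :
    (Function.Surjective (A x₀) → ∀ᶠ x in nhds x₀, Function.Surjective (A x)) ∧
    (Function.Injective (A x₀) → ∀ᶠ x in nhds x₀, Function.Injective (A x)) := by
  exact ⟨eventually_surjective_of_surjective A B hASOT x₀ (hABcpt x₀) hABnorm,
    eventually_injective_of_injective A B hASOT x₀ (hBAcpt x₀) hBAnorm⟩
end

section
/- Let H be a complex Hilbert space, X a compact metrizable space, and A, B : X → B(H) maps such that x ↦ A_x ξ and x ↦ B_x ξ are continuous for every ξ ∈ H, the operators A_x B_x − 1 and B_x A_x − 1 are compact for every x, and x ↦ A_x B_x − 1 and x ↦ B_x A_x − 1 are norm-continuous. Then there exists a finite-dimensional subspace W of H such that for every x ∈ X the composition p ∘ A_x : H → Wᗮ is surjective, where Wᗮ is the orthogonal complement of W and p : H → Wᗮ is the orthogonal projection. (Lemma A2.5: there is a closed subspace of finite codimension onto which the whole family projects surjectively.) -/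
open Filter

/-!
Put `K x = A x * B x - 1`. By compactness of `X` and norm continuity, the family `K` is uniformly
approximated by finitely many compact operators, so the images of the unit ball under all the `K x`
have a common finite `1/2`-net (`exists_finite_net`). Let `W` be its span and `p` the orthogonal
projection onto `Wᗮ`. As `p` kills the net, `‖p * K x‖ ≤ 1/2`, and `1 + p * K x` is invertible by
the Neumann series. If `(1 + p * K x) u = w` with `w ∈ Wᗮ`, then `u ∈ Wᗮ` as well, hence
`p (A x (B x u)) = p u + p (K x u) = w`.
-/

/-- The images of the unit ball under a norm-continuous family of compact operators over a compact
space have a common finite `1/2`-net. -/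
lemma exists_finite_net {H : Type*} [NormedAddCommGroup H] [InnerProductSpace ℂ H]
    {X : Type*} [TopologicalSpace X] [CompactSpace X] (K : X → H →L[ℂ] H)
    (hK : ∀ x, IsCompactOperator (K x)) (hc : Continuous K) :
    ∃ t : Set H, t.Finite ∧ ∀ x, ∀ v : H, ‖v‖ ≤ 1 → ∃ z ∈ t, ‖K x v - z‖ ≤ 1 / 2 := by
  have hnet : ∀ x, ∃ s : Set H, s.Finite ∧
      ∀ v : H, ‖v‖ ≤ 1 → ∃ z ∈ s, ‖K x v - z‖ < 1 / 4 := by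
    intro x
    have hcpt := (hK x).isCompact_closure_image_closedBall (f := (K x : H →ₗ[ℂ] H)) 1
    obtain ⟨s, hs, hcov⟩ := Metric.totallyBounded_iff.mp hcpt.totallyBounded (1 / 4) (by norm_num)
    refine ⟨s, hs, fun v hv => ?_⟩
    have hmem := hcov (subset_closure ⟨v, by simpa using hv, rfl⟩)
    simp only [Set.mem_iUnion, Metric.mem_ball, dist_eq_norm] at hmem
    obtain ⟨z, hz, h⟩ := hmem
    exact ⟨z, hz, h⟩
  choose s hs hsnet using hnet
  obtain ⟨F, hF⟩ := CompactSpace.elim_nhds_subcover (fun x => K ⁻¹' Metric.ball (K x) (1 / 4))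
    (fun x => hc.continuousAt.preimage_mem_nhds (Metric.ball_mem_nhds _ (by norm_num)))
  refine ⟨⋃ x ∈ F, s x, F.finite_toSet.biUnion fun x _ => hs x, fun x v hv => ?_⟩
  have hx : x ∈ ⋃ y ∈ F, K ⁻¹' Metric.ball (K y) (1 / 4) := by
    rw [hF]; trivial
  simp only [Set.mem_iUnion, Set.mem_preimage, Metric.mem_ball, dist_eq_norm] at hx
  obtain ⟨y, hy, hxy⟩ := hx
  obtain ⟨z, hz, hyz⟩ := hsnet y v hv
  refine ⟨z, Set.mem_biUnion hy hz, ?_⟩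
  have h1 : ‖(K x - K y) v‖ ≤ 1 / 4 :=
    ((K x - K y).le_opNorm v).trans (by nlinarith [norm_nonneg v, norm_nonneg (K x - K y)])
  calc ‖K x v - z‖ = ‖(K x - K y) v + (K y v - z)‖ := by simp
    _ ≤ ‖(K x - K y) v‖ + ‖K y v - z‖ := norm_add_le _ _
    _ ≤ 1 / 2 := by linarith

/-- Lemma A2.5: for a continuous family `(A, B)` in `Fred′(H)` over a compact base `X`,
there is a finite-dimensional subspace `W ⊆ H` such that `p ∘ A_x : H → Wᗮ` is surjective
for every `x ∈ X`, where `p` is the orthogonal projection onto `Wᗮ` (the bounded operator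
with `p w ∈ Wᗮ` for all `w`, `p w = w` on `Wᗮ` and `p w = 0` on `W`). -/
theorem stmt_9 {H : Type*} [NormedAddCommGroup H] [InnerProductSpace ℂ H] [CompleteSpace H]
    {X : Type*} [TopologicalSpace X] [TopologicalSpace.MetrizableSpace X] [CompactSpace X]
    (A B : X → H →L[ℂ] H)
    (hASOT : ∀ ξ : H, Continuous fun x => A x ξ)
    (hBSOT : ∀ ξ : H, Continuous fun x => B x ξ)
    (hABcpt : ∀ x, IsCompactOperator (⇑(A x * B x - 1)))
    (hBAcpt : ∀ x, IsCompactOperator (⇑(B x * A x - 1)))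
    (hABnorm : Continuous fun x => A x * B x - 1)
    (hBAnorm : Continuous fun x => B x * A x - 1) :
    ∃ W : Submodule ℂ H, FiniteDimensional ℂ W ∧
      ∃ p : H →L[ℂ] H,
        (∀ w : H, p w ∈ Wᗮ) ∧
        (∀ w ∈ Wᗮ, p w = w) ∧
        (∀ w ∈ W, p w = 0) ∧
        (∀ x : X, ∀ w ∈ Wᗮ, ∃ ξ : H, p (A x ξ) = w) := by
  obtain ⟨t, ht, hnet⟩ := exists_finite_net (fun x => A x * B x - 1) hABcpt hABnorm
  have hfin : FiniteDimensional ℂ (Submodule.span ℂ t) := FiniteDimensional.span_of_finite ℂ ht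
  set W := Submodule.span ℂ t with hW
  set p : H →L[ℂ] H := Wᗮ.starProjection with hp
  have hpmem : ∀ w : H, p w ∈ Wᗮ := fun w => Submodule.starProjection_apply_mem _ _
  have hpid : ∀ w ∈ Wᗮ, p w = w := fun w hw => Submodule.starProjection_eq_self_iff.mpr hw
  have hpzero : ∀ w ∈ W, p w = 0 := fun w hw =>
    (Submodule.starProjection_apply_eq_zero_iff _).mpr (Submodule.le_orthogonal_orthogonal W hw)
  refine ⟨W, hfin, p, hpmem, hpid, hpzero, fun x w hw => ?_⟩
  have hnorm : ‖p * (A x * B x - 1)‖ ≤ 1 / 2 := by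
    let _ : NormedSpace ℝ H := NormedSpace.restrictScalars ℝ ℂ H
    refine ContinuousLinearMap.opNorm_le_of_unit_norm (by norm_num) fun v hv => ?_
    obtain ⟨z, hz, hvz⟩ := hnet x v hv.le
    have heq : (p * (A x * B x - 1)) v = p ((A x * B x - 1) v - z) := by
      rw [map_sub, hpzero z (Submodule.subset_span hz), sub_zero]; rfl
    rw [heq]
    exact (Submodule.norm_starProjection_apply_le _ _).trans hvz
  have hunit : IsUnit (1 + p * (A x * B x - 1)) := by
    have h := isUnit_one_sub_of_norm_lt_one (x := -(p * (A x * B x - 1)))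
      (by rw [norm_neg]; linarith)
    rwa [sub_neg_eq_add] at h
  obtain ⟨R, hR⟩ := hunit.exists_right_inv
  have hu : R w + p (A x (B x (R w)) - R w) = w := by
    simpa using congrArg (fun T : H →L[ℂ] H => T w) hR
  -- `R w` solves `u + p (K x u) = w`, which forces it into `Wᗮ`.
  have humem : R w ∈ Wᗮ := by
    rw [eq_sub_of_add_eq hu]
    exact sub_mem hw (hpmem _)
  refine ⟨B x (R w), ?_⟩
  rw [map_sub, hpid _ humem] at hu
  simpa using hu
end
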